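/- arXiv:1908.00488 — 2 statements merged into one kernel-verified Lean document; each statement's English description precedes it below -/
import Mathlib

section
/- Let A be a set of positive integers whose logarithmic density is 1, i.e. (1/log x)·∑_{a∈A, a≤x} 1/a → 1 as x → ∞. Then the set of multiples M(A) has natural density 1. -/
/-!
The complement `B` of the set of multiples is closed under divisors and disjoint from `A`, so it has
logarithmic density zero. Writing `log n = ∑_{m ∣ n} Λ(n / m)` and using that every divisor `m` of
an element of `B` lies in `B`,
`∑_{n ∈ B, n ≤ N} log n ≤ ∑_{m ∈ B, m ≤ N} ψ(N / m) ≤ C N ∑_{m ∈ B, m ≤ N} 1 / m = o(N log N)`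
by Chebyshev's bound (`sum_log_le_of_divisorClosed`). On the other hand `log n` may be replaced by
`log N` on the left at a total cost of at most `N`, because `N! ≥ (N / e) ^ N`
(`sum_log_sub_log_le`). Hence `B` has `o(N)` elements up to `N`.
-/

open Filter Topology
open scoped Classical

/-- Number of elements of `S` in `[1, N]`. -/
noncomputable def countIn (S : Set ℕ) (N : ℕ) : ℕ :=
  ((Finset.Icc 1 N).filter (fun n => n ∈ S)).card

/-- `S` has natural density `d`. -/
def HasDensity (S : Set ℕ) (d : ℝ) : Prop :=
  Tendsto (fun N : ℕ => (countIn S N : ℝ) / N) atTop (nhds d)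

/-- The set of multiples of `A`. -/
def setOfMultiples (A : Set ℕ) : Set ℕ :=
  {n : ℕ | ∃ a ∈ A, ∃ m : ℕ, 1 ≤ m ∧ n = m * a}

/-- A weak form of Stirling's formula: `N log N - log N! ≤ N`. -/
lemma sum_log_sub_log_le (N : ℕ) :
    ∑ n ∈ Finset.Icc 1 N, (Real.log N - Real.log n) ≤ N := by
  rcases Nat.eq_zero_or_pos N with rfl | hN
  · simp
  have hN' : (0 : ℝ) < N := by exact_mod_cast hN
  have hfac : (0 : ℝ) < (N.factorial : ℝ) := by exact_mod_cast N.factorial_pos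
  have h := Real.pow_div_factorial_le_exp (x := (N : ℝ)) hN'.le N
  have h2 := Real.log_le_log (by positivity) h
  rw [Real.log_exp, Real.log_div (by positivity) hfac.ne', Real.log_pow] at h2
  have h3 : Real.log (N.factorial : ℝ) = ∑ n ∈ Finset.Icc 1 N, Real.log n := by
    clear h2 h hfac hN' hN
    induction N with
    | zero => simp
    | succ n ih =>
      rw [Finset.sum_Icc_succ_top (by omega), ← ih, Nat.factorial_succ, Nat.cast_mul,
        Real.log_mul (by positivity) (by positivity), add_comm]
  rw [Finset.sum_sub_distrib, ← h3]
  simpa using h2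

/-- For a divisor-closed set the sum of `log` is controlled by the sum of reciprocals: expand
`log n` as `∑_{m ∣ n} Λ(n / m)`, exchange the sums and apply Chebyshev's bound to `ψ(N / m)`. -/
lemma sum_log_le_of_divisorClosed (B : Set ℕ) (hB : ∀ n ∈ B, ∀ m, m ∣ n → m ∈ B) (N : ℕ) :
    ∑ n ∈ (Finset.Icc 1 N).filter (fun n => n ∈ B), Real.log n ≤
      (Real.log 4 + 4) * N * ∑ m ∈ (Finset.Icc 1 N).filter (fun m => m ∈ B), (1 : ℝ) / m := by
  set F := (Finset.Icc 1 N).filter (fun n => n ∈ B) with hF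
  have mem_F : ∀ n, n ∈ F ↔ (1 ≤ n ∧ n ≤ N) ∧ n ∈ B := by
    intro n; simp [hF]
  have h1 : ∑ n ∈ F, Real.log n =
      ∑ m ∈ F, ∑ n ∈ F.filter (fun n => m ∣ n), ArithmeticFunction.vonMangoldt (n / m) := by
    have : ∀ n ∈ F, Real.log n =
        ∑ m ∈ n.divisors, ArithmeticFunction.vonMangoldt (n / m) := by
      intro n _
      rw [Nat.sum_div_divisors, ArithmeticFunction.vonMangoldt_sum]
    rw [Finset.sum_congr rfl this]
    apply Finset.sum_comm'
    intro n m
    rw [Finset.mem_filter (s := F), Nat.mem_divisors]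
    constructor
    · rintro ⟨hn, hmn, hn0⟩
      refine ⟨⟨hn, hmn⟩, ?_⟩
      obtain ⟨⟨h1, h2⟩, h3⟩ := (mem_F n).1 hn
      exact (mem_F m).2 ⟨⟨Nat.pos_of_dvd_of_pos hmn h1, (Nat.le_of_dvd h1 hmn).trans h2⟩,
        hB n h3 m hmn⟩
    · rintro ⟨⟨hn, hmn⟩, _⟩
      have := ((mem_F n).1 hn).1.1
      exact ⟨hn, hmn, by omega⟩
  rw [h1, Finset.mul_sum]
  refine Finset.sum_le_sum fun m hm => ?_
  have hm1 : 0 < m := ((mem_F m).1 hm).1.1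
  calc ∑ n ∈ F.filter (fun n => m ∣ n), ArithmeticFunction.vonMangoldt (n / m)
      = ∑ k ∈ (F.filter (fun n => m ∣ n)).image (fun n => n / m),
          ArithmeticFunction.vonMangoldt k := by
        rw [Finset.sum_image]
        intro a ha b hb hab
        have ha' := (Finset.mem_filter.1 ha).2
        have hb' := (Finset.mem_filter.1 hb).2
        exact (Nat.div_left_inj ha' hb').1 hab
    _ ≤ ∑ k ∈ Finset.Ioc 0 ⌊(N : ℝ) / m⌋₊, ArithmeticFunction.vonMangoldt k := by
        apply Finset.sum_le_sum_of_subset_of_nonneg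
        · intro k hk
          obtain ⟨n, hn, rfl⟩ := Finset.mem_image.1 hk
          obtain ⟨hn, hmn⟩ := Finset.mem_filter.1 hn
          obtain ⟨⟨h1, h2⟩, -⟩ := (mem_F n).1 hn
          rw [Nat.floor_div_eq_div, Finset.mem_Ioc]
          exact ⟨Nat.div_pos (Nat.le_of_dvd h1 hmn) hm1, Nat.div_le_div_right h2⟩
        · intros
          exact ArithmeticFunction.vonMangoldt_nonneg
    _ = Chebyshev.psi ((N : ℝ) / m) := rfl
    _ ≤ (Real.log 4 + 4) * ((N : ℝ) / m) := Chebyshev.psi_le_const_mul_self (by positivity)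
    _ = (Real.log 4 + 4) * N * (1 / m) := by ring

/-- The counting bound for a divisor-closed set: `#B(N) log N ≤ N + C N ∑_{m ∈ B, m ≤ N} 1 / m`. -/
lemma countIn_mul_log_le (B : Set ℕ) (hB : ∀ n ∈ B, ∀ m, m ∣ n → m ∈ B) (N : ℕ) :
    (countIn B N : ℝ) * Real.log N ≤ N + (Real.log 4 + 4) * N *
      ∑ m ∈ (Finset.Icc 1 N).filter (fun m => m ∈ B), (1 : ℝ) / m := by
  have h1 := sum_log_le_of_divisorClosed B hB N
  have h2 : ∑ n ∈ (Finset.Icc 1 N).filter (fun n => n ∈ B), (Real.log N - Real.log n) ≤ N := by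
    refine le_trans ?_ (sum_log_sub_log_le N)
    apply Finset.sum_le_sum_of_subset_of_nonneg (Finset.filter_subset _ _)
    intro n hn _
    obtain ⟨hn1, hn2⟩ := Finset.mem_Icc.1 hn
    have : Real.log n ≤ Real.log N :=
      Real.log_le_log (by exact_mod_cast hn1) (by exact_mod_cast hn2)
    linarith
  rw [Finset.sum_sub_distrib, Finset.sum_const, nsmul_eq_mul] at h2
  unfold countIn
  linarith

theorem log_density_one_imp_multiples_density_one (A : Set ℕ) (hA : ∀ a ∈ A, 0 < a)
    (hlog : Tendsto (fun N : ℕ =>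
        (∑ a ∈ (Finset.Icc 1 N).filter (fun a => a ∈ A), (1 : ℝ) / a) / Real.log N)
      atTop (nhds 1)) :
    HasDensity (setOfMultiples A) 1 := by
  -- `0` is removed from the complement: it is never a multiple here, yet every `m` divides it.
  obtain ⟨B, hBmem⟩ : ∃ B : Set ℕ, ∀ n, n ∈ B ↔ 0 < n ∧ n ∉ setOfMultiples A :=
    ⟨{n | 0 < n ∧ n ∉ setOfMultiples A}, fun _ => Iff.rfl⟩
  have hB : ∀ n ∈ B, ∀ m, m ∣ n → m ∈ B := by
    intro n hnB m hmn
    obtain ⟨hn, hnM⟩ := (hBmem n).1 hnB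
    refine (hBmem m).2 ⟨Nat.pos_of_dvd_of_pos hmn hn, ?_⟩
    rintro ⟨a, ha, k, hk, rfl⟩
    obtain ⟨c, rfl⟩ := hmn
    exact hnM ⟨a, ha, k * c, Nat.mul_pos hk (pos_of_mul_pos_right hn (Nat.zero_le _)), by ring⟩
  have hcount : ∀ N, countIn (setOfMultiples A) N + countIn B N = N := by
    intro N
    have h : (Finset.Icc 1 N).filter (fun n => n ∈ B) =
        (Finset.Icc 1 N).filter (fun n => ¬ n ∈ setOfMultiples A) := by
      apply Finset.filter_congr
      intro n hn
      have := (Finset.mem_Icc.1 hn).1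
      exact ⟨fun h => ((hBmem n).1 h).2, fun h => (hBmem n).2 ⟨this, h⟩⟩
    unfold countIn
    rw [h, Finset.card_filter_add_card_filter_not, Nat.card_Icc, Nat.add_sub_cancel]
  have hrec : ∀ N : ℕ, ∑ m ∈ (Finset.Icc 1 N).filter (fun m => m ∈ B), (1 : ℝ) / m ≤
      1 + Real.log N - ∑ a ∈ (Finset.Icc 1 N).filter (fun a => a ∈ A), (1 : ℝ) / a := by
    intro N
    have hharm : ∑ m ∈ Finset.Icc 1 N, (1 : ℝ) / m ≤ 1 + Real.log N := by
      have := harmonic_le_one_add_log N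
      rw [harmonic_eq_sum_Icc] at this
      push_cast at this
      simpa only [one_div] using this
    have hsplit := Finset.sum_filter_add_sum_filter_not (Finset.Icc 1 N) (fun a => a ∈ A)
      (fun m : ℕ => (1 : ℝ) / m)
    have hle : ∑ m ∈ (Finset.Icc 1 N).filter (fun m => m ∈ B), (1 : ℝ) / m ≤
        ∑ m ∈ (Finset.Icc 1 N).filter (fun m => ¬ m ∈ A), (1 : ℝ) / m := by
      apply Finset.sum_le_sum_of_subset_of_nonneg
      · intro m hm
        obtain ⟨hm1, hm2⟩ := Finset.mem_filter.1 hm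
        exact Finset.mem_filter.2 ⟨hm1, fun h => ((hBmem m).1 hm2).2 ⟨m, h, 1, le_rfl, by simp⟩⟩
      · intros
        positivity
    linarith
  have hlogtop : Tendsto (fun N : ℕ => (Real.log N)⁻¹) atTop (nhds 0) :=
    (Real.tendsto_log_atTop.comp tendsto_natCast_atTop_atTop).inv_tendsto_atTop
  have hB0 : Tendsto (fun N : ℕ => (countIn B N : ℝ) / N) atTop (nhds 0) := by
    have hup : Tendsto (fun N : ℕ => (Real.log N)⁻¹ + (Real.log 4 + 4) * ((Real.log N)⁻¹ + 1 -
        (∑ a ∈ (Finset.Icc 1 N).filter (fun a => a ∈ A), (1 : ℝ) / a) / Real.log N))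
        atTop (nhds 0) := by
      simpa using hlogtop.add (((hlogtop.add_const 1).sub hlog).const_mul (Real.log 4 + 4))
    refine squeeze_zero' (Eventually.of_forall fun N => by positivity) ?_ hup
    filter_upwards [eventually_ge_atTop 2] with N hN
    have hN0 : (0 : ℝ) < N := by positivity
    have hL : 0 < Real.log N := Real.log_pos (by exact_mod_cast hN)
    have hC : 0 < Real.log 4 + 4 := by positivity
    have h1 := countIn_mul_log_le B hB N
    have h2 := mul_le_mul_of_nonneg_left (hrec N) (mul_pos hC hN0).le
    rw [div_le_iff₀ hN0, ← mul_le_mul_iff_left₀ hL]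
    refine (h1.trans (add_le_add_right h2 _)).trans_eq ?_
    field_simp
  have hmain : Tendsto (fun N : ℕ => 1 - (countIn B N : ℝ) / N) atTop (nhds 1) := by
    simpa using hB0.const_sub 1
  refine hmain.congr' ?_
  filter_upwards [eventually_ge_atTop 1] with N hN
  have hN0 : (N : ℝ) ≠ 0 := by positivity
  have h : (countIn (setOfMultiples A) N : ℝ) + countIn B N = N := by exact_mod_cast hcount N
  rw [eq_div_iff hN0, sub_mul, div_mul_cancel₀ _ hN0]
  linarith
end

section
/- For every ε > 0 there exists η > 0 such that the set {n ≥ 1 : τ⁺(n) > (1−η)·τ(n)} has upper natural density at most ε. (Equivalently, the limiting distribution ν of τ⁺(n)/τ(n) is continuous at the point z = 1.) -/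
/-!
The idea is that for almost every `n` a positive proportion of the divisors of `n` is redundant for
`tauPlus n`, because it shares its dyadic interval with another divisor. The redundancy comes from
the divisors of `n` supported on a fixed finite set `P` of primes, and multiplying a close pair of
such divisors by any `e` coprime to `P` keeps it close.

For a finite set `S` of primes, the set of those `p ∈ S` that divide a random integer is, in the limit,
a random subset `A` of `S` that contains each `p` independently with probability `1 / p`
(`tendsto_EE`). Call `A` successful (`Succ`) if it has two different subsets whose products agree up
to a factor `exp 8`. The core of the proof is that `A` is successful with probability bounded below
for `S` the set of primes with `2 ^ m < log p ≤ 20 * L`, where `L = 2 ^ (37 * m)` (`block`).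
This is a second moment argument on the signed sums `∑ p ∈ A, ± log p` (signs in `{-1, 0, 1}`) of the
primes with `log p ≤ L`:

* The energy `En` is the probability that two random signed sums over `A` are within `8` of each
  other. `En_iter` splits it according to the largest dyadic scale of `log p` at which the two sign
  vectors differ. If the scale is `2 ^ i`, the vectors agree on all larger primes, which has
  probability `(1 / 3) ^ N` with `N` the number of larger primes in `A`, and the closeness of the sums
  forces the log of one prime near `exp (2 ^ i)` into a bounded interval, which has probability
  `O(2 ^ (-i))` (`EE_Tm`).
* With large probability `N` is, simultaneously for all scales, so large that `(1 / 3) ^ N` decays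
  faster than `2 ^ (-(M - i))` where `L = 2 ^ M` (`PP_not_Gd`). This uses `log 3 > 1`: the typical size
  of `N` is `(M - i) * log 2`. So the energy is `O(1 / L)` with probability at least `1 / 4`
  (`energy_good`).
* By Cauchy–Schwarz the signed sums then visit a positive proportion of the intervals of length `8`
  in `[-8 * L, 8 * L]` (`card_cells`), and two primes beyond `exp L` whose log-difference falls in a
  visited interval exist with probability bounded below (`completion`).

Independent blocks further and further out make success almost certain (`boost`), and combining `8`
disjoint successful sets gives `2 ^ 8` products within a factor `exp 64` (`multi_exists`). These meet
at most `94` dyadic intervals, so two of them share one, even after multiplication by any `e`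
(`pigeonhole`). If `b` is the part of `n` coprime to `P`, each divisor `e` of `b` yields one redundant
divisor of `n` (`image_card_le`). Outside a set of small density no `p ^ k` with `p ∈ P` divides `n`, so that the
number of divisors of `n` is at most `k ^ |P|` times that of `b`, and the redundant divisors form a
positive proportion.
-/

open Filter Topology
open scoped Classical

/-- `τ⁺(n)`: the number of integers `k ≥ 0` such that `n` has a divisor `d`
with `2^k < d ≤ 2^(k+1)`. -/
noncomputable def tauPlus (n : ℕ) : ℕ :=
  ((Finset.range n).filter (fun k => ∃ d, d ∣ n ∧ 2 ^ k < d ∧ d ≤ 2 ^ (k + 1))).card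

namespace MT

/-! ### Mertens estimates for primes in logarithmic ranges -/

/-- The primes `p` with `x < log p ≤ y`. -/
noncomputable def LP (x y : ℝ) : Finset ℕ :=
  (Finset.range (⌊Real.exp y⌋₊ + 1)).filter
    (fun p => p.Prime ∧ x < Real.log p ∧ Real.log p ≤ y)

lemma mem_LP {x y : ℝ} {p : ℕ} :
    p ∈ LP x y ↔ p.Prime ∧ x < Real.log p ∧ Real.log p ≤ y := by
  simp only [LP, Finset.mem_filter, Finset.mem_range, and_iff_right_iff_imp]
  rintro ⟨hp, -, h⟩
  have h0 : (0 : ℝ) < p := by exact_mod_cast hp.pos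
  rw [Nat.lt_succ_iff]
  exact Nat.le_floor ((Real.log_le_iff_le_exp h0).1 h)

lemma log_factorial_eq (n : ℕ) :
    Real.log (n.factorial : ℝ)
      = ∑ p ∈ Nat.primesLE n, (n.factorial.factorization p : ℝ) * Real.log p := by
  rw [Real.log_nat_eq_sum_factorization, Finsupp.sum]
  apply Finset.sum_subset
  · intro p hp
    have := Nat.support_factorization n.factorial ▸ hp
    have hpp := Nat.prime_of_mem_primeFactors this
    exact Nat.mem_primesLE.2 ⟨(hpp.dvd_factorial).1 (Nat.dvd_of_mem_primeFactors this), hpp⟩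
  · intro p _ hp
    simp [Finsupp.notMem_support_iff.1 hp]

lemma mertens_nat_upper {n : ℕ} (hn : 1 ≤ n) :
    ∑ p ∈ Nat.primesLE n, Real.log p / p ≤ Real.log n + Real.log 4 := by
  have hn0 : (0 : ℝ) < n := by exact_mod_cast hn
  have h1 : ∑ p ∈ Nat.primesLE n, ((n : ℝ) / p - 1) * Real.log p
      ≤ Real.log (n.factorial : ℝ) := by
    rw [log_factorial_eq]
    apply Finset.sum_le_sum
    intro p hp
    have hpp := Nat.prime_of_mem_primesLE hp
    have hlog : 0 ≤ Real.log p := Real.log_natCast_nonneg p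
    apply mul_le_mul_of_nonneg_right _ hlog
    have h2 : n / p ≤ n.factorial.factorization p := by
      rw [Nat.factorization_factorial hpp (Nat.lt_succ_self _)]
      have hmem : 1 ∈ Finset.Ico 1 (Nat.log p n + 1) := by
        have := Nat.log_pos hpp.one_lt (Nat.le_of_mem_primesLE hp)
        exact Finset.mem_Ico.2 ⟨le_rfl, by omega⟩
      have := Finset.single_le_sum (f := fun i => n / p ^ i) (fun i _ => Nat.zero_le _) hmem
      simpa using this
    have h3 : (n : ℝ) / p < ((n / p : ℕ) : ℝ) + 1 := by
      rw [← Nat.floor_div_eq_div (K := ℝ)]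
      exact Nat.lt_floor_add_one _
    have h4 : ((n / p : ℕ) : ℝ) ≤ n.factorial.factorization p := by exact_mod_cast h2
    linarith
  have h2 : Real.log (n.factorial : ℝ) ≤ n * Real.log n := by
    rw [← Real.log_pow]
    apply Real.log_le_log (by exact_mod_cast n.factorial_pos)
    exact_mod_cast Nat.factorial_le_pow n
  have h3 := Chebyshev.theta_le_log4_mul_x (x := n) hn0.le
  rw [Chebyshev.theta_eq_sum_primesLE_log] at h3
  have h4 : ∑ p ∈ Nat.primesLE n, ((n : ℝ) / p - 1) * Real.log p
      = n * (∑ p ∈ Nat.primesLE n, Real.log p / p) - ∑ p ∈ Nat.primesLE n, Real.log p := by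
    rw [Finset.mul_sum, ← Finset.sum_sub_distrib]
    apply Finset.sum_congr rfl
    intro p _
    ring
  rw [h4] at h1
  have h5 : n * (∑ p ∈ Nat.primesLE n, Real.log p / p) ≤ n * (Real.log n + Real.log 4) := by
    linarith
  exact le_of_mul_le_mul_left h5 hn0

/-- The telescoping bound that controls the contribution of higher prime powers. -/
lemma sum_log_div_le (n : ℕ) (hn : 1 ≤ n) :
    ∑ k ∈ Finset.Icc 2 n, Real.log k / (k * (k - 1 : ℝ)) ≤ 2 - (Real.log n + 2) / n := by
  induction n, hn using Nat.le_induction with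
  | base => simp
  | succ n hn ih =>
    rw [Finset.sum_Icc_succ_top (by omega)]
    have hn0 : (0 : ℝ) < n := by exact_mod_cast hn
    have h1 : Real.log ((n : ℝ) + 1) ≤ Real.log n + 1 / n := by
      have : Real.log (((n : ℝ) + 1) / n) ≤ ((n : ℝ) + 1) / n - 1 :=
        Real.log_le_sub_one_of_pos (by positivity)
      rw [Real.log_div (by positivity) (by positivity)] at this
      have h : ((n : ℝ) + 1) / n - 1 = 1 / n := by field_simp; ring
      linarith
    push_cast
    have h2 : Real.log ((n : ℝ) + 1) / (((n : ℝ) + 1) * ((n : ℝ) + 1 - 1))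
        ≤ (Real.log n + 2) / n - (Real.log ((n : ℝ) + 1) + 2) / ((n : ℝ) + 1) := by
      rw [div_sub_div _ _ (by positivity) (by positivity), add_sub_cancel_right]
      rw [div_le_div_iff₀ (by positivity) (by positivity)]
      have h3 : (n : ℝ) * (Real.log (n + 1)) ≤ n * Real.log n + 1 := by
        have := mul_le_mul_of_nonneg_left h1 hn0.le
        rw [mul_add, mul_one_div_cancel hn0.ne'] at this
        exact this
      have h5 : Real.log ((n : ℝ) + 1) ≤
        (Real.log n + 2) * (n + 1) - n * (Real.log (n + 1) + 2) := by
        have : (1 : ℝ) / n ≤ 1 := by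
          rw [div_le_one hn0]; exact_mod_cast hn
        nlinarith
      calc Real.log ((n : ℝ) + 1) * (n * (n + 1))
          ≤ ((Real.log n + 2) * (n + 1) - n * (Real.log (n + 1) + 2)) * (n * (n + 1)) :=
            mul_le_mul_of_nonneg_right h5 (by positivity)
        _ = _ := by ring
    linarith

lemma mertens_nat_lower {n : ℕ} (hn : 1 ≤ n) :
    Real.log n - 3 ≤ ∑ p ∈ Nat.primesLE n, Real.log p / p := by
  have hn0 : (0 : ℝ) < n := by exact_mod_cast hn
  have h1 : Real.log (n.factorial : ℝ)
      ≤ ∑ p ∈ Nat.primesLE n, (n : ℝ) * (Real.log p / p + Real.log p / (p * (p - 1 : ℝ))) := by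
    rw [log_factorial_eq]
    apply Finset.sum_le_sum
    intro p hp
    have hpp := Nat.prime_of_mem_primesLE hp
    have : Fact p.Prime := ⟨hpp⟩
    have hlog : 0 ≤ Real.log p := Real.log_natCast_nonneg p
    have hp1 : (1 : ℝ) < p := by exact_mod_cast hpp.one_lt
    have hL := sub_one_mul_padicValNat_factorial_lt_of_ne_zero p (n := n) (by omega)
    rw [← Nat.factorization_def _ hpp] at hL
    have hL' : ((p : ℝ) - 1) * n.factorial.factorization p ≤ n := by
      have : (((p - 1) * n.factorial.factorization p : ℕ) : ℝ) ≤ n := by exact_mod_cast hL.le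
      rwa [Nat.cast_mul, Nat.cast_sub hpp.one_lt.le, Nat.cast_one] at this
    have h2 : (n.factorial.factorization p : ℝ) ≤ n / (p - 1) := by
      rw [le_div_iff₀ (by linarith)]; linarith
    have hne : (p : ℝ) - 1 ≠ 0 := by linarith
    calc (n.factorial.factorization p : ℝ) * Real.log p ≤ n / (p - 1) * Real.log p :=
          mul_le_mul_of_nonneg_right h2 hlog
      _ = _ := by field_simp; ring
  have h2 : (n : ℝ) * Real.log n - n ≤ Real.log (n.factorial : ℝ) := by
    have := Stirling.le_log_factorial_stirling (n := n) (by omega)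
    have h3 : 0 ≤ Real.log n := Real.log_natCast_nonneg n
    have h4 : 0 ≤ Real.log (2 * Real.pi) := Real.log_nonneg (by linarith [Real.pi_gt_three])
    linarith
  have h3 : ∑ p ∈ Nat.primesLE n, Real.log p / (p * (p - 1 : ℝ)) ≤ 2 := by
    have hlog : 0 ≤ Real.log n := Real.log_natCast_nonneg n
    calc _ ≤ ∑ k ∈ Finset.Icc 2 n, Real.log k / (k * (k - 1 : ℝ)) := by
          apply Finset.sum_le_sum_of_subset_of_nonneg
          · rw [Nat.primesLE_eq_filter_Icc_two]; exact Finset.filter_subset _ _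
          · intro k hk _
            have : (2 : ℝ) ≤ k := by exact_mod_cast (Finset.mem_Icc.1 hk).1
            have h : 0 ≤ Real.log k := Real.log_natCast_nonneg k
            have : (0 : ℝ) ≤ k - 1 := by linarith
            positivity
      _ ≤ 2 - (Real.log n + 2) / n := sum_log_div_le n hn
      _ ≤ 2 := by
          have : 0 ≤ (Real.log n + 2) / n := by positivity
          linarith
  rw [← Finset.mul_sum, Finset.sum_add_distrib] at h1
  have h4 : (n : ℝ) * (Real.log n - 3) ≤ n * ∑ p ∈ Nat.primesLE n, Real.log p / p := by
    nlinarith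
  exact le_of_mul_le_mul_left h4 hn0

lemma LP_zero_eq (y : ℝ) : LP 0 y = Nat.primesLE ⌊Real.exp y⌋₊ := by
  ext p
  rw [mem_LP, Nat.mem_primesLE]
  constructor
  · rintro ⟨hp, -, h⟩
    have h0 : (0 : ℝ) < p := by exact_mod_cast hp.pos
    exact ⟨Nat.le_floor ((Real.log_le_iff_le_exp h0).1 h), hp⟩
  · rintro ⟨h, hp⟩
    have h0 : (0 : ℝ) < p := by exact_mod_cast hp.pos
    exact ⟨hp, Real.log_pos (by exact_mod_cast hp.one_lt),
      (Real.log_le_iff_le_exp h0).2 ((Nat.le_floor_iff (Real.exp_pos y).le).1 h)⟩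

lemma mertens_zero {y : ℝ} (hy : 0 ≤ y) :
    y - 4 ≤ ∑ p ∈ LP 0 y, Real.log p / p ∧ ∑ p ∈ LP 0 y, Real.log p / p ≤ y + 2 := by
  rw [LP_zero_eq]
  set n := ⌊Real.exp y⌋₊
  have hE : (1 : ℝ) ≤ Real.exp y := Real.one_le_exp hy
  have hn : 1 ≤ n := Nat.le_floor (by simpa using hE)
  have hn0 : (0 : ℝ) < n := by exact_mod_cast hn
  have h1 := mertens_nat_upper hn
  have h2 := mertens_nat_lower hn
  have h3 : Real.log n ≤ y := by
    rw [Real.log_le_iff_le_exp hn0]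
    exact Nat.floor_le (Real.exp_pos y).le
  have h4 : y ≤ Real.log n + Real.log 2 := by
    rw [← Real.log_mul hn0.ne' (by norm_num), Real.le_log_iff_exp_le (by positivity)]
    have h5 := (Nat.lt_floor_add_one (Real.exp y)).le
    have h6 : (1 : ℝ) ≤ n := by exact_mod_cast hn
    change Real.exp y ≤ (n : ℝ) + 1 at h5
    linarith
  have h5 : Real.log 4 = 2 * Real.log 2 := by
    rw [show (4 : ℝ) = 2 ^ 2 by norm_num, Real.log_pow]; norm_num
  have h6 := Real.log_two_lt_d9
  constructor <;> linarith

lemma LP_disjoint {x y z w : ℝ} (h : y ≤ z) : Disjoint (LP x y) (LP z w) := by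
  rw [Finset.disjoint_left]
  intro p hp hq
  rw [mem_LP] at hp hq
  linarith [hp.2.2, hq.2.1]

lemma LP_union {x y z : ℝ} (h1 : x ≤ y) (h2 : y ≤ z) : LP x y ∪ LP y z = LP x z := by
  ext p
  simp only [Finset.mem_union, mem_LP]
  constructor
  · rintro (⟨a, b, c⟩ | ⟨a, b, c⟩)
    · exact ⟨a, b, c.trans h2⟩
    · exact ⟨a, h1.trans_lt b, c⟩
  · rintro ⟨a, b, c⟩
    rcases le_or_gt (Real.log p) y with h | h
    · exact Or.inl ⟨a, b, h⟩
    · exact Or.inr ⟨a, h, c⟩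

lemma LP_mono {x y z w : ℝ} (h1 : z ≤ x) (h2 : y ≤ w) : LP x y ⊆ LP z w := by
  intro p
  simp only [mem_LP]
  rintro ⟨a, b, c⟩
  exact ⟨a, h1.trans_lt b, c.trans h2⟩

lemma sum_LP_split {x y z : ℝ} (h1 : x ≤ y) (h2 : y ≤ z) (f : ℕ → ℝ) :
    ∑ p ∈ LP x z, f p = ∑ p ∈ LP x y, f p + ∑ p ∈ LP y z, f p := by
  rw [← LP_union h1 h2, Finset.sum_union (LP_disjoint le_rfl)]

lemma logdiv_nonneg (p : ℕ) : 0 ≤ Real.log p / p :=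
  div_nonneg (Real.log_natCast_nonneg p) (Nat.cast_nonneg p)

lemma mertens_lower {x y : ℝ} (h0 : 0 ≤ x) (h : x ≤ y) :
    y - x - 6 ≤ ∑ p ∈ LP x y, Real.log p / p := by
  have h1 := sum_LP_split h0 h (fun p => Real.log p / p)
  have h2 := (mertens_zero (h0.trans h)).1
  have h3 := (mertens_zero h0).2
  linarith

lemma mertens_upper {x y : ℝ} (h : x ≤ y) :
    ∑ p ∈ LP x y, Real.log p / p ≤ y - x + 6 := by
  rcases le_or_gt 0 x with h0 | h0
  · have h1 := sum_LP_split h0 h (fun p => Real.log p / p)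
    have h2 := (mertens_zero (h0.trans h)).2
    have h3 := (mertens_zero h0).1
    linarith
  · have hsub : LP x y ⊆ LP 0 (max y 0) := by
      intro p
      simp only [mem_LP]
      rintro ⟨a, b, c⟩
      exact ⟨a, Real.log_pos (by exact_mod_cast a.one_lt), c.trans (le_max_left _ _)⟩
    have h1 := Finset.sum_le_sum_of_subset_of_nonneg (f := fun p : ℕ => Real.log p / p) hsub
      (fun p _ _ => logdiv_nonneg p)
    have h2 := (mertens_zero (le_max_right y 0)).2
    have h3 : max y 0 ≤ y - x := max_le (by linarith) (by linarith)
    linarith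

/-- Upper bound for `∑ 1 / p` over primes with `log p` in a short interval above `X`. -/
lemma recip_upper {x y X : ℝ} (h : x ≤ y) (hX : 0 < X) :
    ∑ p ∈ (LP x y).filter (fun p : ℕ => X ≤ Real.log p), (1 : ℝ) / p ≤ (y - x + 6) / X := by
  have h1 := mertens_upper h
  rw [le_div_iff₀ hX, Finset.sum_mul]
  calc _ ≤ ∑ p ∈ (LP x y).filter (fun p : ℕ => X ≤ Real.log p), Real.log p / p := by
        apply Finset.sum_le_sum
        intro p hp
        have := (Finset.mem_filter.1 hp).2
        rw [div_mul_eq_mul_div, one_mul]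
        gcongr
    _ ≤ ∑ p ∈ LP x y, Real.log p / p :=
        Finset.sum_le_sum_of_subset_of_nonneg (Finset.filter_subset _ _)
          (fun p _ _ => logdiv_nonneg p)
    _ ≤ _ := h1

lemma recip_upper' {x y : ℝ} (h : x ≤ y) (hX : 0 < x) :
    ∑ p ∈ LP x y, (1 : ℝ) / p ≤ (y - x + 6) / x := by
  have := recip_upper h hX
  rwa [Finset.filter_true_of_mem] at this
  intro p hp
  exact (mem_LP.1 hp).2.1.le

lemma recip_lower {x y : ℝ} (h0 : 0 ≤ x) (h : x ≤ y) (hy : 0 < y) :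
    (y - x - 6) / y ≤ ∑ p ∈ LP x y, (1 : ℝ) / p := by
  have h1 := mertens_lower h0 h
  rw [div_le_iff₀ hy, Finset.sum_mul]
  refine h1.trans (Finset.sum_le_sum fun p hp => ?_)
  have := (mem_LP.1 hp).2.2
  rw [div_mul_eq_mul_div, one_mul]
  gcongr

/-- For large `x`, `∑ 1 / p` over `x < log p ≤ 2 x` is close to `log 2 = 0.693…`. -/
lemma recip_dyadic {x : ℝ} (hx : 10 ^ 6 ≤ x) : (0.69 : ℝ) ≤ ∑ p ∈ LP x (2 * x), (1 : ℝ) / p := by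
  -- cut `(x, 2 * x]` into `100` pieces of equal length
  have key : ∀ J : ℕ, ∑ j ∈ Finset.range J, (1 - 6 / 10 ^ 4 : ℝ) / (101 + j)
      ≤ ∑ p ∈ LP x (x + J * (x / 100)), (1 : ℝ) / p := by
    intro J
    induction J with
    | zero => 
      simp only [Finset.range_zero, Finset.sum_empty]
      exact Finset.sum_nonneg (fun p _ => by positivity)
    | succ J ih =>
      have hx0 : 0 < x := by linarith
      rw [Finset.sum_range_succ, sum_LP_split (y := x + J * (x / 100))]
      · have h1 := recip_lower (x := x + J * (x / 100)) (y := x + (J + 1 : ℕ) * (x / 100))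
          (by positivity) (by push_cast; nlinarith) (by positivity)
        refine add_le_add ih (le_trans ?_ h1)
        rw [div_le_div_iff₀ (by positivity) (by positivity)]
        push_cast
        have : (0 : ℝ) ≤ J := by positivity
        nlinarith [mul_nonneg this (sub_nonneg.2 hx)]
      · have : 0 ≤ J * (x / 100) := by positivity
        linarith
      · push_cast; nlinarith
  have h := key 100
  have h2 : x + (100 : ℕ) * (x / 100) = 2 * x := by push_cast; ring
  rw [h2] at h
  refine le_trans ?_ h
  simp only [Finset.sum_range_succ, Finset.sum_range_zero]
  norm_num

/-! ### Random sets of primes -/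

/-- The expectation of `F A`, where `A` is the random subset of `S` that contains each `p ∈ S`
independently with probability `1 / p`. For a finite set `S` of primes this is the limiting law of
the set of those `p ∈ S` that divide a random integer. -/
noncomputable def EE (S : Finset ℕ) (F : Finset ℕ → ℝ) : ℝ :=
  ∑ A ∈ S.powerset, ((∏ p ∈ A, (1 / p : ℝ)) * ∏ p ∈ S \ A, (1 - 1 / p : ℝ)) * F A

/-- The probability of an event under the law defining `EE`. -/
noncomputable def PP (S : Finset ℕ) (P : Finset ℕ → Prop) : ℝ :=
  EE S (fun A => if P A then 1 else 0)

lemma w_nonneg (p : ℕ) : (0 : ℝ) ≤ 1 - 1 / p := by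
  rcases Nat.eq_zero_or_pos p with h | h
  · simp [h]
  · have : (1 : ℝ) ≤ p := by exact_mod_cast h
    have : (1 : ℝ) / p ≤ 1 := by rw [div_le_one (by linarith)]; exact this
    linarith

lemma wt_nonneg (S A : Finset ℕ) :
    0 ≤ (∏ p ∈ A, (1 / p : ℝ)) * ∏ p ∈ S \ A, (1 - 1 / p : ℝ) :=
  mul_nonneg (Finset.prod_nonneg fun p _ => by positivity)
    (Finset.prod_nonneg fun p _ => w_nonneg p)

lemma EE_empty (F : Finset ℕ → ℝ) : EE ∅ F = F ∅ := by simp [EE]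

lemma EE_congr {S : Finset ℕ} {F G : Finset ℕ → ℝ} (h : ∀ A ⊆ S, F A = G A) :
    EE S F = EE S G :=
  Finset.sum_congr rfl fun A hA => by rw [h A (Finset.mem_powerset.1 hA)]

lemma EE_mono {S : Finset ℕ} {F G : Finset ℕ → ℝ} (h : ∀ A ⊆ S, F A ≤ G A) :
    EE S F ≤ EE S G :=
  Finset.sum_le_sum fun A hA =>
    mul_le_mul_of_nonneg_left (h A (Finset.mem_powerset.1 hA)) (wt_nonneg S A)

lemma EE_add (S : Finset ℕ) (F G : Finset ℕ → ℝ) :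
    EE S (fun A => F A + G A) = EE S F + EE S G := by
  simp only [EE, mul_add, Finset.sum_add_distrib]

lemma EE_sub (S : Finset ℕ) (F G : Finset ℕ → ℝ) :
    EE S (fun A => F A - G A) = EE S F - EE S G := by
  simp only [EE, mul_sub, Finset.sum_sub_distrib]

lemma EE_mul (S : Finset ℕ) (c : ℝ) (F : Finset ℕ → ℝ) :
    EE S (fun A => c * F A) = c * EE S F := by
  simp only [EE, Finset.mul_sum]
  exact Finset.sum_congr rfl fun A _ => by ring

lemma EE_sum {ι : Type*} (S : Finset ℕ) (s : Finset ι) (F : ι → Finset ℕ → ℝ) :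
    EE S (fun A => ∑ i ∈ s, F i A) = ∑ i ∈ s, EE S (F i) := by
  simp only [EE, Finset.mul_sum]
  exact Finset.sum_comm

lemma EE_prod (S : Finset ℕ) (g : ℕ → ℝ) :
    EE S (fun A => ∏ p ∈ A, g p) = ∏ p ∈ S, (g p / p + (1 - 1 / p)) := by
  rw [Finset.prod_add, EE]
  refine Finset.sum_congr rfl fun A _ => ?_
  simp only [div_eq_mul_inv, Finset.prod_mul_distrib, one_mul]
  ring

lemma EE_const (S : Finset ℕ) (c : ℝ) : EE S (fun _ => c) = c := by
  have h := EE_prod S (fun _ => 1)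
  simp only [Finset.prod_const_one] at h
  have h2 : ∀ p ∈ S, (1 / p + (1 - 1 / p) : ℝ) = 1 := fun p _ => by ring
  rw [Finset.prod_congr rfl h2, Finset.prod_const_one] at h
  have := EE_mul S c (fun _ => 1)
  rw [h] at this
  simpa using this

lemma EE_nonneg {S : Finset ℕ} {F : Finset ℕ → ℝ} (h : ∀ A ⊆ S, 0 ≤ F A) : 0 ≤ EE S F := by
  have := EE_mono (S := S) (F := fun _ => 0) (G := F) h
  rwa [EE_const] at this

lemma EE_insert {S : Finset ℕ} {p : ℕ} (hp : p ∉ S) (F : Finset ℕ → ℝ) :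
    EE (insert p S) F
      = (1 - 1 / p) * EE S F + 1 / p * EE S (fun A => F (insert p A)) := by
  simp only [EE]
  rw [Finset.sum_powerset_insert hp, Finset.mul_sum, Finset.mul_sum]
  congr 1
  · refine Finset.sum_congr rfl fun A hA => ?_
    have hpA : p ∉ A := fun h => hp (Finset.mem_powerset.1 hA h)
    rw [Finset.insert_sdiff_of_notMem _ hpA, Finset.prod_insert (by simp [hp])]
    ring
  · refine Finset.sum_congr rfl fun A hA => ?_
    have hpA : p ∉ A := fun h => hp (Finset.mem_powerset.1 hA h)
    rw [Finset.prod_insert hpA, Finset.insert_sdiff_insert, Finset.sdiff_insert_of_notMem hp]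
    ring

/-- Independence of the restrictions of the random set to disjoint sets. -/
lemma EE_union {S T : Finset ℕ} (h : Disjoint S T) (F : Finset ℕ → ℝ) :
    EE (S ∪ T) F = EE S (fun A => EE T (fun B => F (A ∪ B))) := by
  induction S using Finset.induction_on generalizing F with
  | empty => simp [EE_empty]
  | insert p S hp ih =>
    rw [Finset.disjoint_insert_left] at h
    rw [Finset.insert_union, EE_insert (by simp [hp, h.1]), EE_insert hp, ih h.2, ih h.2]
    simp only [Finset.insert_union]

lemma EE_marginal {S T : Finset ℕ} (h : T ⊆ S) (F : Finset ℕ → ℝ) :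
    EE S (fun A => F (A ∩ T)) = EE T F := by
  have hS : S = T ∪ (S \ T) := (Finset.union_sdiff_of_subset h).symm
  rw [hS, EE_union Finset.disjoint_sdiff]
  refine EE_congr fun A hA => ?_
  rw [EE_congr (G := fun _ => F A), EE_const]
  intro B hB
  congr 1
  ext x
  simp only [Finset.mem_inter, Finset.mem_union]
  constructor
  · rintro ⟨h1 | h1, h2⟩
    · exact h1
    · exact absurd h2 (Finset.mem_sdiff.1 (hB h1)).2
  · exact fun hx => ⟨Or.inl hx, hA hx⟩

/-- Removing a prescribed element `q` of the random set costs a factor at most `2 / q`. -/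
lemma EE_pull {S : Finset ℕ} {q : ℕ} (hq : q ∈ S) (hq2 : 2 ≤ q) (F : Finset ℕ → ℝ)
    (hF : ∀ A, 0 ≤ F A) :
    EE S (fun A => if q ∈ A then F (A.erase q) else 0) ≤ 2 / q * EE S F := by
  have hS : S = insert q (S.erase q) := (Finset.insert_erase hq).symm
  have hn : q ∉ S.erase q := Finset.notMem_erase q S
  rw [hS, EE_insert hn, EE_insert hn]
  have h1 : EE (S.erase q) (fun A => if q ∈ A then F (A.erase q) else 0) = 0 := by
    rw [EE_congr (G := fun _ => 0), EE_const]
    intro A hA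
    rw [if_neg fun h => hn (hA h)]
  have h2 : EE (S.erase q) (fun A => if q ∈ insert q A then F ((insert q A).erase q) else 0)
      = EE (S.erase q) F := by
    refine EE_congr fun A hA => ?_
    rw [if_pos (Finset.mem_insert_self _ _), Finset.erase_insert fun h => hn (hA h)]
  rw [h1, h2]
  have h3 : 0 ≤ EE (S.erase q) F := EE_nonneg fun A _ => hF A
  have h4 : 0 ≤ EE (S.erase q) (fun A => F (insert q A)) := EE_nonneg fun A _ => hF _
  have h5 : (2 : ℝ) ≤ q := by exact_mod_cast hq2
  have h6 : (1 : ℝ) / q ≤ 1 / 2 := one_div_le_one_div_of_le (by norm_num) h5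
  have h7 : (0 : ℝ) ≤ 1 / q := by positivity
  have h8 : (2 : ℝ) / q = 2 * (1 / q) := by ring
  rw [h8]
  nlinarith [mul_nonneg h7 h3, mul_nonneg (mul_nonneg h7 h7) h4,
    mul_nonneg (mul_nonneg h7 h3) (sub_nonneg.2 h6)]

lemma EE_sum_mem (S : Finset ℕ) (f : ℕ → ℝ) :
    EE S (fun A => ∑ p ∈ A, f p) = ∑ p ∈ S, f p / p := by
  induction S using Finset.induction_on with
  | empty => simp [EE_empty]
  | insert p S hp ih =>
    rw [EE_insert hp, ih, Finset.sum_insert hp]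
    have : EE S (fun A => ∑ q ∈ insert p A, f q) = f p + ∑ q ∈ S, f q / q := by
      rw [← ih, ← EE_const S (f p), ← EE_add]
      refine EE_congr fun A hA => ?_
      rw [Finset.sum_insert fun h => hp (hA h)]
    rw [this]
    ring

lemma PP_nonneg (S : Finset ℕ) (P : Finset ℕ → Prop) : 0 ≤ PP S P :=
  EE_nonneg fun A _ => by split_ifs <;> norm_num

lemma PP_le_one (S : Finset ℕ) (P : Finset ℕ → Prop) : PP S P ≤ 1 := by
  have := EE_mono (S := S) (F := fun A => if P A then 1 else 0) (G := fun _ => 1)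
    (fun A _ => by split_ifs <;> norm_num)
  rwa [EE_const] at this

lemma PP_mono {S : Finset ℕ} {P Q : Finset ℕ → Prop} (h : ∀ A ⊆ S, P A → Q A) :
    PP S P ≤ PP S Q :=
  EE_mono fun A hA => by
    by_cases hP : P A
    · simp [hP, h A hA hP]
    · simp only [hP, if_false]; split_ifs <;> norm_num

lemma PP_compl (S : Finset ℕ) (P : Finset ℕ → Prop) :
    PP S P = 1 - PP S (fun A => ¬ P A) := by
  rw [PP, PP, ← EE_const S 1, ← EE_sub, EE_const]
  exact EE_congr fun A _ => by by_cases h : P A <;> simp [h]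

lemma PP_or_le (S : Finset ℕ) (P Q : Finset ℕ → Prop) :
    PP S (fun A => P A ∨ Q A) ≤ PP S P + PP S Q := by
  rw [PP, PP, PP, ← EE_add]
  exact EE_mono fun A _ => by by_cases h : P A <;> by_cases h' : Q A <;> simp [h, h']

lemma PP_exists_le {ι : Type*} (S : Finset ℕ) (s : Finset ι) (P : ι → Finset ℕ → Prop) :
    PP S (fun A => ∃ i ∈ s, P i A) ≤ ∑ i ∈ s, PP S (P i) := by
  simp only [PP]
  rw [← EE_sum]
  refine EE_mono fun A _ => ?_
  by_cases h : ∃ i ∈ s, P i A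
  · rw [if_pos h]
    obtain ⟨i, hi, hP⟩ := h
    have := Finset.single_le_sum (f := fun i => if P i A then (1 : ℝ) else 0)
      (fun i _ => by split_ifs <;> norm_num) hi
    simpa [hP] using this
  · rw [if_neg h]
    exact Finset.sum_nonneg fun i _ => by split_ifs <;> norm_num

lemma PP_markov (S : Finset ℕ) {F : Finset ℕ → ℝ} (hF : ∀ A ⊆ S, 0 ≤ F A) {c : ℝ} (hc : 0 < c) :
    PP S (fun A => c < F A) ≤ EE S F / c := by
  rw [le_div_iff₀ hc, mul_comm, PP, ← EE_mul]
  refine EE_mono fun A hA => ?_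
  split_ifs with h
  · linarith
  · simpa using hF A hA

/-- The set of `p ∈ S` dividing a random integer has the law defining `EE S`. -/
lemma tendsto_EE (S : Finset ℕ) (hS : ∀ p ∈ S, p.Prime) (F : Finset ℕ → ℝ) :
    Tendsto (fun N : ℕ => (∑ n ∈ Finset.Icc 1 N, F (S.filter (· ∣ n))) / (N : ℝ))
      atTop (𝓝 (EE S F)) := by
  induction S using Finset.induction_on generalizing F with
  | empty =>
    simp only [EE_empty, Finset.filter_empty, Finset.sum_const, Nat.card_Icc, nsmul_eq_mul]
    refine tendsto_const_nhds.congr' ?_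
    filter_upwards [eventually_gt_atTop 0] with N hN
    have : (N : ℝ) ≠ 0 := by positivity
    simp only [Nat.add_sub_cancel]
    field_simp
  | insert p S hp ih =>
    have hpp : p.Prime := hS p (Finset.mem_insert_self _ _)
    have hp0 : (0 : ℝ) < p := by exact_mod_cast hpp.pos
    have hS' : ∀ q ∈ S, q.Prime := fun q hq => hS q (Finset.mem_insert_of_mem hq)
    -- multiples `p * m` of `p` see the same primes of `S` as `m`
    have hmul : ∀ G : Finset ℕ → ℝ, ∀ N : ℕ,
        ∑ n ∈ (Finset.Icc 1 N).filter (p ∣ ·), G (S.filter (· ∣ n))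
          = ∑ m ∈ Finset.Icc 1 (N / p), G (S.filter (· ∣ m)) := by
      intro G N
      symm
      refine Finset.sum_bij (fun m _ => p * m) ?_ ?_ ?_ ?_
      · intro m hm
        rw [Finset.mem_Icc] at hm
        rw [Finset.mem_filter, Finset.mem_Icc]
        refine ⟨⟨Nat.mul_pos hpp.pos hm.1, ?_⟩, dvd_mul_right _ _⟩
        rw [mul_comm]
        exact (Nat.le_div_iff_mul_le hpp.pos).1 hm.2
      · intro a _ b _ h
        exact Nat.eq_of_mul_eq_mul_left hpp.pos h
      · intro n hn
        rw [Finset.mem_filter, Finset.mem_Icc] at hn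
        obtain ⟨⟨h1, h2⟩, m, rfl⟩ := hn
        refine ⟨m, ?_, rfl⟩
        rw [Finset.mem_Icc]
        refine ⟨Nat.pos_of_ne_zero (by rintro rfl; simp at h1), ?_⟩
        rw [Nat.le_div_iff_mul_le hpp.pos, mul_comm]; exact h2
      · intro m _
        congr 1
        refine Finset.filter_congr fun q hq => ?_
        have hqp : q.Coprime p := by
          rw [Nat.coprime_primes (hS' q hq) hpp]
          rintro rfl; exact hp hq
        exact ⟨fun h => dvd_mul_of_dvd_right h _, fun h => hqp.dvd_of_dvd_mul_left h⟩
    have hfl : Tendsto (fun N : ℕ => ((N / p : ℕ) : ℝ) / N) atTop (𝓝 (1 / p)) := by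
      have h := (tendsto_nat_floor_mul_div_atTop (R := ℝ) (a := 1 / p) (by positivity)).comp
        tendsto_natCast_atTop_atTop
      refine h.congr fun N => ?_
      simp only [Function.comp]
      congr 2
      rw [one_div_mul_eq_div, Nat.floor_div_eq_div]
    have hdiv : Tendsto (fun N : ℕ => N / p) atTop atTop :=
      Nat.tendsto_div_const_atTop hpp.ne_zero
    have hsub : ∀ G : Finset ℕ → ℝ, Tendsto (fun N : ℕ =>
        (∑ m ∈ Finset.Icc 1 (N / p), G (S.filter (· ∣ m))) / (N : ℝ)) atTop
        (𝓝 (EE S G * (1 / p))) := by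
      intro G
      refine (((ih hS' G).comp hdiv).mul hfl).congr' ?_
      filter_upwards [hdiv.eventually_gt_atTop 0] with N hN
      have : ((N / p : ℕ) : ℝ) ≠ 0 := by positivity
      simp only [Function.comp]
      field_simp
    have h := ((ih hS' F).sub (hsub F)).add (hsub (fun A => F (insert p A)))
    rw [EE_insert hp]
    have e : (1 - 1 / (p : ℝ)) * EE S F + 1 / p * EE S (fun A => F (insert p A))
        = EE S F - EE S F * (1 / p) + EE S (fun A => F (insert p A)) * (1 / p) := by ring
    rw [e]
    refine h.congr fun N => ?_
    rw [← sub_div, ← add_div]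
    congr 1
    rw [← hmul F, ← hmul (fun A => F (insert p A)),
      ← Finset.sum_filter_add_sum_filter_not (Finset.Icc 1 N) (p ∣ ·)
        (fun n => F (S.filter (· ∣ n))),
      ← Finset.sum_filter_add_sum_filter_not (Finset.Icc 1 N) (p ∣ ·)
        (fun n => F ((insert p S).filter (· ∣ n)))]
    rw [add_sub_cancel_left, add_comm]
    congr 1
    · refine Finset.sum_congr rfl fun n hn => ?_
      rw [Finset.filter_insert, if_pos (Finset.mem_filter.1 hn).2]
    · refine Finset.sum_congr rfl fun n hn => ?_
      rw [Finset.filter_insert, if_neg (Finset.mem_filter.1 hn).2]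

/-! ### The energy of signed sums -/

/-- A choice of sign in `{-1, 0, 1}` for every `p ∈ S`, encoded by `Fin 3`. -/
abbrev Om (S : Finset ℕ) := S → Fin 3

/-- The sign attached to `p`, as a real number. -/
noncomputable def sg {S : Finset ℕ} (e : Om S) (p : ℕ) : ℝ :=
  if h : p ∈ S then ((e ⟨p, h⟩ : ℕ) : ℝ) - 1 else 0

/-- The signed sum of the `log p`, for `p ∈ A`. -/
noncomputable def sm {S : Finset ℕ} (e : Om S) (A : Finset ℕ) : ℝ :=
  ∑ p ∈ A, sg e p * Real.log p

/-- The average over independent uniform sign vectors `e`, `f`. -/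
noncomputable def av (S : Finset ℕ) (H : Om S → Om S → ℝ) : ℝ :=
  (∑ f, ∑ e, H e f) / (3 ^ S.card) ^ 2

/-- The energy of `A`: the probability that two independent random signed sums over `A` lie within
`l` of each other. -/
noncomputable def En (S : Finset ℕ) (l : ℝ) (A : Finset ℕ) : ℝ :=
  av S (fun e f => if |sm e A - sm f A| ≤ l then 1 else 0)

/-- The part of the energy of `A` coming from sign vectors that differ somewhere on `W`. -/
noncomputable def Tm (S : Finset ℕ) (l : ℝ) (W A : Finset ℕ) : ℝ :=
  av S (fun e f => if (∃ q ∈ A ∩ W, sg e q ≠ sg f q) ∧ |sm e A - sm f A| ≤ l then 1 else 0)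

lemma card_Om (S : Finset ℕ) : Fintype.card (Om S) = 3 ^ S.card := by simp

lemma av_mono {S : Finset ℕ} {H H' : Om S → Om S → ℝ} (h : ∀ e f, H e f ≤ H' e f) :
    av S H ≤ av S H' :=
  div_le_div_of_nonneg_right
    (Finset.sum_le_sum fun f _ => Finset.sum_le_sum fun e _ => h e f) (by positivity)

lemma av_add (S : Finset ℕ) (H H' : Om S → Om S → ℝ) :
    av S (fun e f => H e f + H' e f) = av S H + av S H' := by
  simp only [av, Finset.sum_add_distrib, add_div]

lemma av_const (S : Finset ℕ) (c : ℝ) : av S (fun _ _ => c) = c := by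
  simp only [av, Finset.sum_const, Finset.card_univ, card_Om, nsmul_eq_mul]
  push_cast
  field_simp

lemma av_nonneg {S : Finset ℕ} {H : Om S → Om S → ℝ} (h : ∀ e f, 0 ≤ H e f) : 0 ≤ av S H := by
  have := av_mono h
  rwa [av_const] at this

lemma sum_update {S : Finset ℕ} (p : S) (g : Om S → ℝ) :
    ∑ e : Om S, ∑ a : Fin 3, g (Function.update e p a) = 3 * ∑ e, g e := by
  have h3 : ∑ e : Om S, ∑ _a : Fin 3, g e = 3 * ∑ e, g e := by
    simp [Finset.mul_sum]
  rw [← h3, ← Fintype.sum_prod_type' (fun (e : Om S) (a : Fin 3) => g (Function.update e p a)),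
    ← Fintype.sum_prod_type' (fun (e : Om S) (_ : Fin 3) => g e)]
  -- `(e, a) ↦ (update e p a, e p)` is an involution
  refine Finset.sum_bij' (fun x _ => (Function.update x.1 p x.2, x.1 p))
    (fun x _ => (Function.update x.1 p x.2, x.1 p)) ?_ ?_ ?_ ?_ ?_
  all_goals intro x _
  all_goals simp

lemma sum_fix {S : Finset ℕ} (p : S) (c : Fin 3) (G : Om S → ℝ)
    (hG : ∀ e a, G (Function.update e p a) = G e) :
    ∑ e, (if e p = c then G e else 0) = 1 / 3 * ∑ e, G e := by
  have h := sum_update p (fun e => if e p = c then G e else 0)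
  simp only [Function.update_self, hG, Finset.sum_ite_eq', Finset.mem_univ, if_true] at h
  linarith

lemma sg_update_of_ne {S : Finset ℕ} (e : Om S) (p : S) (a : Fin 3) {q : ℕ} (h : q ≠ p) :
    sg (Function.update e p a) q = sg e q := by
  unfold sg
  split_ifs with hq
  · rw [Function.update_of_ne]
    intro h'
    exact h (congrArg Subtype.val h')
  · rfl

lemma sg_eq_iff {S : Finset ℕ} (e f : Om S) {p : ℕ} (hp : p ∈ S) :
    sg e p = sg f p ↔ e ⟨p, hp⟩ = f ⟨p, hp⟩ := by
  simp only [sg, hp, dif_pos, sub_left_inj, Nat.cast_inj, Fin.val_inj]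

/-- Two random sign vectors agree on `B` with probability `3 ^ (-|B|)`, independently of the
signs outside `B`. -/
lemma av_agree {S : Finset ℕ} (B : Finset ℕ) (hB : B ⊆ S) (H : Om S → Om S → ℝ)
    (hH : ∀ e f (p : S) a, (p : ℕ) ∈ B → H (Function.update e p a) f = H e f) :
    av S (fun e f => if ∀ p ∈ B, sg e p = sg f p then H e f else 0)
      = (1 / 3) ^ B.card * av S H := by
  have key : ∀ f, ∑ e, (if ∀ p ∈ B, sg e p = sg f p then H e f else 0)
      = (1 / 3) ^ B.card * ∑ e, H e f := by
    intro f
    induction B using Finset.induction_on with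
    | empty => simp
    | insert q B hq ih =>
      have hqS : q ∈ S := hB (Finset.mem_insert_self _ _)
      have ih' := ih (fun x hx => hB (Finset.mem_insert_of_mem hx))
        (fun e f p a hp => hH e f p a (Finset.mem_insert_of_mem hp))
      rw [Finset.card_insert_of_notMem hq, pow_succ', mul_assoc, ← ih',
        ← sum_fix ⟨q, hqS⟩ (f ⟨q, hqS⟩)]
      · refine Finset.sum_congr rfl fun e _ => ?_
        simp only [Finset.forall_mem_insert, sg_eq_iff e f hqS]
        by_cases h : e ⟨q, hqS⟩ = f ⟨q, hqS⟩ <;> simp [h]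
      · intro e a
        rw [hH e f ⟨q, hqS⟩ a (Finset.mem_insert_self _ _)]
        have : (∀ p ∈ B, sg (Function.update e ⟨q, hqS⟩ a) p = sg f p)
            ↔ ∀ p ∈ B, sg e p = sg f p := by
          refine forall₂_congr fun p hp => ?_
          rw [sg_update_of_ne]
          rintro rfl; exact hq hp
        simp only [this]
  simp only [av, key, ← Finset.mul_sum]
  rw [mul_div_assoc]

lemma sm_split {S : Finset ℕ} (e : Om S) (A W : Finset ℕ) :
    sm e A = sm e (A \ W) + sm e (A ∩ W) := by
  unfold sm
  rw [← Finset.sum_sdiff (Finset.inter_subset_left : A ∩ W ⊆ A), Finset.sdiff_inter_self_left]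

/-- Either the signs agree on all of `A ∩ W`, and the primes there cancel, or the pair is counted
by `Tm`. -/
lemma En_step (S : Finset ℕ) (l : ℝ) (A W : Finset ℕ) (hA : A ⊆ S) :
    En S l A ≤ (1 / 3) ^ (A ∩ W).card * En S l (A \ W) + Tm S l W A := by
  unfold En Tm
  rw [← av_agree (A ∩ W) (Finset.inter_subset_left.trans hA), ← av_add]
  · refine av_mono fun e f => ?_
    by_cases h1 : ∀ p ∈ A ∩ W, sg e p = sg f p
    · have h2 : sm e A - sm f A = sm e (A \ W) - sm f (A \ W) := by
        have h3 : sm e (A ∩ W) = sm f (A ∩ W) :=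
          Finset.sum_congr rfl fun p hp => by rw [h1 p hp]
        rw [sm_split e A W, sm_split f A W, h3]; ring
      rw [if_pos h1, h2]
      split_ifs <;> norm_num
    · have h2 : ∃ q ∈ A ∩ W, sg e q ≠ sg f q := by push Not at h1; exact h1
      rw [if_neg h1]
      simp only [h2, true_and, zero_add]
      exact le_rfl
  · intro e f p a hp
    have : sm (Function.update e p a) (A \ W) = sm e (A \ W) := by
      refine Finset.sum_congr rfl fun q hq => ?_
      rw [sg_update_of_ne]
      rintro rfl
      exact (Finset.mem_sdiff.1 hq).2 (Finset.mem_inter.1 hp).2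
    rw [this]

lemma Tm_nonneg (S : Finset ℕ) (l : ℝ) (W A : Finset ℕ) : 0 ≤ Tm S l W A :=
  av_nonneg fun e f => by split_ifs <;> norm_num

lemma En_nonneg (S : Finset ℕ) (l : ℝ) (A : Finset ℕ) : 0 ≤ En S l A :=
  av_nonneg fun e f => by split_ifs <;> norm_num

lemma En_le_one (S : Finset ℕ) (l : ℝ) (A : Finset ℕ) : En S l A ≤ 1 := by
  rw [← av_const S 1]
  exact av_mono fun e f => by split_ifs <;> norm_num

lemma sg_diff_mem {S : Finset ℕ} (e f : Om S) (q : ℕ) (h : sg e q ≠ sg f q) :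
    sg e q - sg f q ∈ ({1, -1, 2, -2} : Finset ℝ) := by
  unfold sg at *
  split_ifs at * with hq
  · generalize e ⟨q, hq⟩ = a at *
    generalize f ⟨q, hq⟩ = b at *
    fin_cases a <;> fin_cases b <;> norm_num at *
  · exact absurd rfl h

/-- Few primes `q` satisfy `|v log q + t| ≤ l`: the condition puts `log q` in a short interval. -/
lemma recip_near {X l : ℝ} (hX : 0 < X) (hl : 0 ≤ l) (W : Finset ℕ)
    (hW : ∀ q ∈ W, q.Prime ∧ X ≤ Real.log q) (t v : ℝ) (hv : 1 ≤ |v|) :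
    ∑ q ∈ W.filter (fun q : ℕ => |v * Real.log q + t| ≤ l), (1 : ℝ) / q ≤ (2 * l + 7) / X := by
  have h := recip_upper (x := -t / v - l - 1) (y := -t / v + l) (by linarith) hX
  refine le_trans (Finset.sum_le_sum_of_subset_of_nonneg ?_ fun _ _ _ => by positivity)
    (h.trans (le_of_eq (by ring)))
  intro q hq
  obtain ⟨hqW, hq2⟩ := Finset.mem_filter.1 hq
  have hv0 : v ≠ 0 := by rintro rfl; simp at hv; linarith
  have h1 : v * Real.log q + t = v * (Real.log q + t / v) := by field_simp
  rw [h1, abs_mul] at hq2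
  have h2 : |Real.log q + t / v| ≤ l :=
    le_trans (le_mul_of_one_le_left (abs_nonneg _) hv) hq2
  rw [abs_le] at h2
  have h3 : -t / v = - (t / v) := by ring
  rw [Finset.mem_filter, mem_LP]
  exact ⟨⟨(hW q hqW).1, by linarith, by linarith⟩, (hW q hqW).2⟩

/-- Two signed sums that differ at some prime `q ∈ W` are close with small probability: given the other
primes of the random set, closeness forces `log q` into a bounded number of short intervals. -/
lemma EE_Tm (S U W : Finset ℕ) (hW : W ⊆ U) (hU : U ⊆ S) {X l : ℝ} (hX : 0 < X) (hl : 0 ≤ l)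
    (hWp : ∀ q ∈ W, q.Prime ∧ X ≤ Real.log q) :
    EE S (fun A => Tm S l W (A ∩ U)) ≤ 8 * (2 * l + 7) / X := by
  -- `fQ e f q A = 1` when inserting `q` into `A` makes the two signed sums close
  let fQ : Om S → Om S → ℕ → Finset ℕ → ℝ := fun e f q A =>
    if sg e q ≠ sg f q ∧
      |(sg e q - sg f q) * Real.log q + (sm e (A ∩ U) - sm f (A ∩ U))| ≤ l then 1 else 0
  have hf0 : ∀ e f q A, 0 ≤ fQ e f q A := fun e f q A => by
    simp only [fQ]; split_ifs <;> norm_num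
  have hsum : ∀ e f A, ∑ q ∈ W, 2 / (q : ℝ) * fQ e f q A ≤ 8 * (2 * l + 7) / X := by
    intro e f A
    set t := sm e (A ∩ U) - sm f (A ∩ U)
    calc ∑ q ∈ W, 2 / (q : ℝ) * fQ e f q A
        ≤ ∑ q ∈ W, ∑ v ∈ ({1, -1, 2, -2} : Finset ℝ),
            (if |v * Real.log q + t| ≤ l then 2 / (q : ℝ) else 0) := by
          refine Finset.sum_le_sum fun q _ => ?_
          by_cases h : sg e q ≠ sg f q ∧ |(sg e q - sg f q) * Real.log q + t| ≤ l
          · have h1 : fQ e f q A = 1 := if_pos h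
            have := Finset.single_le_sum
              (f := fun v : ℝ => if |v * Real.log q + t| ≤ l then 2 / (q : ℝ) else 0)
              (fun v _ => by split_ifs <;> positivity) (sg_diff_mem e f q h.1)
            simp only [h.2, if_true] at this
            rw [h1, mul_one]; exact this
          · have h1 : fQ e f q A = 0 := if_neg h
            rw [h1, mul_zero]
            exact Finset.sum_nonneg fun v _ => by split_ifs <;> positivity
      _ = ∑ v ∈ ({1, -1, 2, -2} : Finset ℝ),
            2 * ∑ q ∈ W.filter (fun q : ℕ => |v * Real.log q + t| ≤ l), (1 : ℝ) / q := by
          rw [Finset.sum_comm]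
          refine Finset.sum_congr rfl fun v _ => ?_
          rw [Finset.mul_sum, Finset.sum_filter]
          refine Finset.sum_congr rfl fun q _ => ?_
          split_ifs <;> ring
      _ ≤ ∑ v ∈ ({1, -1, 2, -2} : Finset ℝ), 2 * ((2 * l + 7) / X) := by
          refine Finset.sum_le_sum fun v hv => ?_
          have hv1 : 1 ≤ |v| := by
            simp only [Finset.mem_insert, Finset.mem_singleton] at hv
            rcases hv with rfl | rfl | rfl | rfl <;> norm_num
          have := recip_near hX hl W hWp t v hv1
          linarith
      _ ≤ 8 * (2 * l + 7) / X := by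
          rw [Finset.sum_const, nsmul_eq_mul]
          have hc : (({1, -1, 2, -2} : Finset ℝ).card : ℝ) ≤ 4 := by
            exact_mod_cast Finset.card_le_four
          have h0 : 0 ≤ (2 * l + 7) / X := by positivity
          calc _ ≤ 4 * (2 * ((2 * l + 7) / X)) := by gcongr
            _ = _ := by ring
  have hpt : ∀ A ⊆ S, Tm S l W (A ∩ U) ≤
      av S (fun e f => ∑ q ∈ W, if q ∈ A then fQ e f q (A.erase q) else 0) := by
    intro A hA
    refine av_mono fun e f => ?_
    by_cases h : (∃ q ∈ A ∩ U ∩ W, sg e q ≠ sg f q) ∧ |sm e (A ∩ U) - sm f (A ∩ U)| ≤ l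
    · rw [if_pos h]
      obtain ⟨⟨q, hq, hne⟩, hl⟩ := h
      simp only [Finset.mem_inter] at hq
      obtain ⟨⟨hqA, hqU⟩, hqW⟩ := hq
      have hins : A ∩ U = insert q (A.erase q ∩ U) := by
        ext x
        simp only [Finset.mem_inter, Finset.mem_insert, Finset.mem_erase]
        by_cases hx : x = q
        · subst hx; simp [hqA, hqU]
        · simp [hx]
      have hq' : q ∉ A.erase q ∩ U := by simp
      have hval : fQ e f q (A.erase q) = 1 := by
        refine if_pos ⟨hne, ?_⟩
        have h1 : ∀ g : Om S, sm g (A ∩ U) = sg g q * Real.log q + sm g (A.erase q ∩ U) := by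
          intro g; rw [hins]; exact Finset.sum_insert hq'
        rw [h1, h1] at hl
        convert hl using 2
        ring
      have := Finset.single_le_sum (f := fun q => if q ∈ A then fQ e f q (A.erase q) else 0)
        (fun q _ => by split_ifs; exacts [hf0 _ _ _ _, le_rfl]) hqW
      simp only [hqA, if_true, hval] at this
      exact this
    · rw [if_neg h]
      exact Finset.sum_nonneg fun q _ => by split_ifs; exacts [hf0 _ _ _ _, le_rfl]
  have hswap : ∀ H : Om S → Om S → Finset ℕ → ℝ,
      EE S (fun A => av S (fun e f => H e f A)) = av S (fun e f => EE S (H e f)) := by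
    intro H
    simp only [av]
    have h1 : ∀ A, (∑ f, ∑ e, H e f A) / (3 ^ S.card : ℝ) ^ 2
        = ((3 ^ S.card : ℝ) ^ 2)⁻¹ * ∑ f, ∑ e, H e f A := fun A => by
      rw [div_eq_inv_mul]
    simp only [h1]
    rw [EE_mul, EE_sum, div_eq_inv_mul]
    congr 1
    exact Finset.sum_congr rfl fun f _ => EE_sum _ _ _
  refine (EE_mono hpt).trans ?_
  rw [hswap (fun e f A => ∑ q ∈ W, if q ∈ A then fQ e f q (A.erase q) else 0),
    ← av_const S (8 * (2 * l + 7) / X)]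
  refine av_mono fun e f => ?_
  rw [EE_sum]
  calc _ ≤ ∑ q ∈ W, 2 / (q : ℝ) * EE S (fQ e f q) :=
        Finset.sum_le_sum fun q hq =>
          EE_pull (hU (hW hq)) (hWp q hq).1.two_le _ (hf0 e f q)
    _ = EE S (fun A => ∑ q ∈ W, 2 / (q : ℝ) * fQ e f q A) := by
        rw [EE_sum]
        exact Finset.sum_congr rfl fun q _ => (EE_mul _ _ _).symm
    _ ≤ EE S (fun _ => 8 * (2 * l + 7) / X) := EE_mono fun A _ => hsum e f A
    _ = _ := EE_const _ _

/-! ### Bounding the energy -/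

lemma LP_self (x : ℝ) : LP x x = ∅ := by
  refine Finset.eq_empty_of_forall_notMem fun p hp => ?_
  rw [mem_LP] at hp
  linarith [hp.2.1, hp.2.2]

lemma two_pow_mono {i j : ℕ} (h : i ≤ j) : (2 : ℝ) ^ i ≤ 2 ^ j :=
  pow_le_pow_right₀ (by norm_num) h

/-- Conditioning on the signs of the largest primes first: either they all agree, or the pair of
sign vectors is counted by `Tm` at the first dyadic scale (from above) where they differ. -/
lemma En_iter (S : Finset ℕ) (l : ℝ) (m : ℕ) (A : Finset ℕ) (hA : A ⊆ S) (j : ℕ) (hj : m ≤ j) :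
    En S l (A ∩ LP (2 ^ m) (2 ^ j)) ≤ (1 / 3) ^ (A ∩ LP (2 ^ m) (2 ^ j)).card
      + ∑ i ∈ Finset.Ico m j, (1 / 3) ^ (A ∩ LP (2 ^ (i + 1)) (2 ^ j)).card
        * Tm S l (LP (2 ^ i) (2 ^ (i + 1))) (A ∩ LP (2 ^ m) (2 ^ (i + 1))) := by
  induction j, hj using Nat.le_induction with
  | base => simpa [LP_self] using En_le_one S l ∅
  | succ j hj ih =>
    have hun : ∀ i, i ≤ j → (1 / 3 : ℝ) ^ (A ∩ LP (2 ^ i) (2 ^ (j + 1))).card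
        = (1 / 3) ^ (A ∩ LP (2 ^ j) (2 ^ (j + 1))).card
          * (1 / 3) ^ (A ∩ LP (2 ^ i) (2 ^ j)).card := by
      intro i hi
      rw [← LP_union (two_pow_mono hi) (two_pow_mono (Nat.le_succ j)), Finset.inter_union_distrib_left,
        Finset.card_union_of_disjoint, pow_add, mul_comm]
      exact (LP_disjoint le_rfl).mono Finset.inter_subset_right Finset.inter_subset_right
    have hst := En_step S l (A ∩ LP (2 ^ m) (2 ^ (j + 1))) (LP (2 ^ j) (2 ^ (j + 1)))
      (Finset.inter_subset_left.trans hA)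
    have e1 : A ∩ LP (2 ^ m) (2 ^ (j + 1)) ∩ LP (2 ^ j) (2 ^ (j + 1))
        = A ∩ LP (2 ^ j) (2 ^ (j + 1)) := by
      rw [Finset.inter_assoc, Finset.inter_eq_right.2 (LP_mono (two_pow_mono hj) le_rfl)]
    have e2 : (A ∩ LP (2 ^ m) (2 ^ (j + 1))) \ LP (2 ^ j) (2 ^ (j + 1))
        = A ∩ LP (2 ^ m) (2 ^ j) := by
      rw [← LP_union (two_pow_mono hj) (two_pow_mono (Nat.le_succ j)), Finset.inter_sdiff_assoc,
        Finset.union_sdiff_cancel_right (LP_disjoint le_rfl)]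
    rw [e1, e2] at hst
    refine hst.trans ?_
    rw [Finset.sum_Ico_succ_top hj, LP_self, hun m hj]
    have h3 : ∀ i ∈ Finset.Ico m j, (1 / 3 : ℝ) ^ (A ∩ LP (2 ^ (i + 1)) (2 ^ (j + 1))).card
        * Tm S l (LP (2 ^ i) (2 ^ (i + 1))) (A ∩ LP (2 ^ m) (2 ^ (i + 1)))
        = (1 / 3) ^ (A ∩ LP (2 ^ j) (2 ^ (j + 1))).card
          * ((1 / 3 : ℝ) ^ (A ∩ LP (2 ^ (i + 1)) (2 ^ j)).card
        * Tm S l (LP (2 ^ i) (2 ^ (i + 1))) (A ∩ LP (2 ^ m) (2 ^ (i + 1)))) := by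
      intro i hi
      rw [hun (i + 1) (Finset.mem_Ico.1 hi).2, mul_assoc]
    rw [Finset.sum_congr rfl h3, ← Finset.mul_sum, ← add_assoc, ← mul_add]
    have := mul_le_mul_of_nonneg_left ih
      (by positivity : (0 : ℝ) ≤ (1 / 3) ^ (A ∩ LP (2 ^ j) (2 ^ (j + 1))).card)
    simp only [Finset.inter_empty, Finset.card_empty, pow_zero, one_mul]
    linarith

lemma geom_le {r : ℝ} (h0 : 0 ≤ r) (h1 : r < 1) (m M : ℕ) :
    ∑ i ∈ Finset.Ico m (M + 1), r ^ (M - i) ≤ 1 / (1 - r) := by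
  rw [Finset.sum_Ico_reflect (fun i => r ^ i) m le_rfl, one_div, ← tsum_geometric_of_lt_one h0 h1]
  exact (summable_geometric_of_lt_one h0 h1).sum_le_tsum _ fun _ _ => by positivity

lemma recip_two_pow {i M : ℕ} (hi : 20 ≤ i) (hM : i ≤ M) :
    0.69 * ((M - i : ℕ) : ℝ) ≤ ∑ p ∈ LP (2 ^ i) (2 ^ M), (1 : ℝ) / p := by
  induction M, hM using Nat.le_induction with
  | base => simp [LP_self]
  | succ M hM ih =>
    rw [sum_LP_split (two_pow_mono hM) (two_pow_mono (Nat.le_succ M))]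
    have h := recip_dyadic (x := 2 ^ M) (le_trans (by norm_num) (two_pow_mono (hi.trans hM)))
    rw [← pow_succ'] at h
    rw [Nat.succ_sub hM]
    push_cast
    linarith

/-- The Laplace transform of the number of primes of `A` beyond `2 ^ i`. -/
lemma EE_pow_le {m i M : ℕ} (hm : 20 ≤ m) (hmi : m ≤ i) (hM : i ≤ M) :
    EE (LP (2 ^ m) (2 ^ M)) (fun A => (0.947 : ℝ) ^ (A ∩ LP (2 ^ i) (2 ^ M)).card)
      ≤ (1 / 1.03657) ^ (M - i) := by
  have hsub : LP (2 ^ i) (2 ^ M) ⊆ LP (2 ^ m) (2 ^ M) := LP_mono (two_pow_mono hmi) le_rfl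
  rw [EE_marginal hsub (fun A => (0.947 : ℝ) ^ A.card)]
  have h1 : ∀ A : Finset ℕ, (0.947 : ℝ) ^ A.card = ∏ p ∈ A, (0.947 : ℝ) := fun A => by simp
  simp only [h1]
  rw [EE_prod]
  calc _ ≤ ∏ p ∈ LP (2 ^ i) (2 ^ M), Real.exp (-(0.053 * (1 / (p : ℝ)))) := by
        refine Finset.prod_le_prod (fun p _ => ?_) fun p _ => ?_
        · have := w_nonneg p
          positivity
        · have := Real.add_one_le_exp (-(0.053 * (1 / (p : ℝ))))
          refine le_trans (le_of_eq ?_) this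
          ring
    _ = Real.exp (-(0.053 * ∑ p ∈ LP (2 ^ i) (2 ^ M), (1 : ℝ) / p)) := by
        rw [← Real.exp_sum, Finset.sum_neg_distrib, Finset.mul_sum]
    _ ≤ Real.exp ((M - i : ℕ) * (-0.03657)) := by
        refine Real.exp_le_exp.2 ?_
        have := recip_two_pow (hm.trans hmi) hM
        linarith
    _ = Real.exp (-0.03657) ^ (M - i) := Real.exp_nat_mul _ _
    _ ≤ _ := by
        refine pow_le_pow_left₀ (Real.exp_nonneg _) ?_ _
        rw [Real.exp_neg, ← one_div]
        refine one_div_le_one_div_of_le (by norm_num) ?_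
        have := Real.add_one_le_exp (0.03657 : ℝ)
        linarith

/-- The event that `A` has many primes with `2 ^ i < log p ≤ 2 ^ M`, for every `i`. The constants satisfy
`1 / 3 ≤ 0.947 ^ 20` and `2 * 0.965 ^ 20 < 1`, as needed for the energy, and
`exp (-0.053 * 0.69) < 0.965`, as needed for the event to be likely. -/
def Gd (m M : ℕ) (A : Finset ℕ) : Prop :=
  ∀ i ∈ Finset.Ico m (M + 1),
    (0.947 : ℝ) ^ (A ∩ LP (2 ^ i) (2 ^ M)).card ≤ 20000 * 0.965 ^ (M - i)

lemma PP_not_Gd {m M : ℕ} (hm : 20 ≤ m) :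
    PP (LP (2 ^ m) (2 ^ M)) (fun A => ¬ Gd m M A) ≤ 1 / 4 := by
  have h1 : ∀ A ⊆ LP (2 ^ m) (2 ^ M), ¬ Gd m M A → ∃ i ∈ Finset.Ico m (M + 1),
      (20000 : ℝ) * 0.965 ^ (M - i) < 0.947 ^ (A ∩ LP (2 ^ i) (2 ^ M)).card := by
    intro A _ h
    unfold Gd at h
    push Not at h
    exact h
  refine (PP_mono h1).trans ((PP_exists_le _ _ _).trans ?_)
  calc _ ≤ ∑ i ∈ Finset.Ico m (M + 1), (1 / 20000 : ℝ) * (0.9998 : ℝ) ^ (M - i) := by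
        refine Finset.sum_le_sum fun i hi => ?_
        rw [Finset.mem_Ico] at hi
        refine (PP_markov _ (fun A _ => by positivity) (by positivity)).trans ?_
        rw [div_le_iff₀ (by positivity)]
        refine (EE_pow_le hm hi.1 (by omega)).trans ?_
        have : (1 / 1.03657 : ℝ) ^ (M - i) ≤ (0.9998 * 0.965) ^ (M - i) :=
          pow_le_pow_left₀ (by norm_num) (by norm_num) _
        rw [mul_pow] at this
        linarith
    _ ≤ 1 / 4 := by
        rw [← Finset.mul_sum]
        have := geom_le (r := 0.9998) (by norm_num) (by norm_num) m M
        norm_num at this ⊢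
        linarith

/-- On the good event the weights in `En_iter` decay faster than `2 ^ (-(M - i))`. -/
lemma Gd_third {m M : ℕ} {A : Finset ℕ} (h : Gd m M A) {i : ℕ} (h1 : m ≤ i) (h2 : i ≤ M) :
    (1 / 3 : ℝ) ^ (A ∩ LP (2 ^ i) (2 ^ M)).card ≤ 20000 ^ 20 * (0.965 ^ 20) ^ (M - i) := by
  have h3 := h i (Finset.mem_Ico.2 ⟨h1, by omega⟩)
  calc (1 / 3 : ℝ) ^ (A ∩ LP (2 ^ i) (2 ^ M)).card
      ≤ (0.947 ^ 20) ^ (A ∩ LP (2 ^ i) (2 ^ M)).card :=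
        pow_le_pow_left₀ (by norm_num) (by norm_num) _
    _ = (0.947 ^ (A ∩ LP (2 ^ i) (2 ^ M)).card) ^ 20 := by rw [← pow_mul, ← pow_mul, mul_comm]
    _ ≤ (20000 * 0.965 ^ (M - i)) ^ 20 := pow_le_pow_left₀ (by positivity) h3 _
    _ = _ := by rw [mul_pow, ← pow_mul, ← pow_mul, mul_comm (M - i)]

/-- The exponent `37 * m` makes the diagonal contribution `(1 / 3) ^ |A|` negligible. -/
lemma EE_energy {m : ℕ} {l : ℝ} (hl : 0 ≤ l) :
    EE (LP (2 ^ m) (2 ^ (37 * m))) (fun A => if Gd m (37 * m) A then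
        En (LP (2 ^ m) (2 ^ (37 * m))) l A else 0)
      ≤ 20000 ^ 20 * (1 + 1000 * (2 * l + 7)) / 2 ^ (37 * m) := by
  set M := 37 * m with hM
  set S := LP (2 ^ m) (2 ^ M) with hS
  have hpt : ∀ A ⊆ S, (if Gd m M A then En S l A else 0) ≤
      20000 ^ 20 * ((0.965 ^ 20) ^ (M - m) + ∑ i ∈ Finset.Ico m M,
        (0.965 ^ 20) ^ (M - 1 - i)
          * Tm S l (LP (2 ^ i) (2 ^ (i + 1))) (A ∩ LP (2 ^ m) (2 ^ (i + 1)))) := by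
    intro A hA
    split_ifs with hG
    · have h := En_iter S l m A hA M (by omega)
      rw [← hS, Finset.inter_eq_left.2 hA] at h
      refine h.trans ?_
      rw [mul_add, Finset.mul_sum]
      have h0 := Gd_third hG (i := m) le_rfl (by omega)
      rw [← hS, Finset.inter_eq_left.2 hA] at h0
      refine add_le_add h0 (Finset.sum_le_sum fun i hi => ?_)
      rw [Finset.mem_Ico] at hi
      rw [← mul_assoc, show M - 1 - i = M - (i + 1) by omega]
      exact mul_le_mul_of_nonneg_right (Gd_third hG (by omega) (by omega)) (Tm_nonneg _ _ _ _)
    · refine mul_nonneg (by positivity) (add_nonneg (by positivity)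
        (Finset.sum_nonneg fun i _ => mul_nonneg (by positivity) (Tm_nonneg _ _ _ _)))
  refine (EE_mono hpt).trans ?_
  rw [EE_mul, EE_add, EE_const, EE_sum, mul_div_assoc]
  refine mul_le_mul_of_nonneg_left ?_ (by positivity)
  have hterm : ∀ i ∈ Finset.Ico m M, EE S (fun A => (0.965 ^ 20) ^ (M - 1 - i)
          * Tm S l (LP (2 ^ i) (2 ^ (i + 1))) (A ∩ LP (2 ^ m) (2 ^ (i + 1))))
      ≤ 16 * (2 * l + 7) / 2 ^ M * (2 * 0.965 ^ 20) ^ (M - 1 - i) := by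
    intro i hi
    rw [Finset.mem_Ico] at hi
    rw [EE_mul]
    have h := EE_Tm S (LP (2 ^ m) (2 ^ (i + 1))) (LP (2 ^ i) (2 ^ (i + 1)))
      (LP_mono (two_pow_mono hi.1) le_rfl) (LP_mono le_rfl (two_pow_mono (by omega)))
      (X := 2 ^ i) (l := l) (by positivity) hl
      (fun q hq => ⟨(mem_LP.1 hq).1, (mem_LP.1 hq).2.1.le⟩)
    calc _ ≤ (0.965 ^ 20 : ℝ) ^ (M - 1 - i) * (8 * (2 * l + 7) / 2 ^ i) :=
          mul_le_mul_of_nonneg_left h (by positivity)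
      _ = _ := by
          have e : (2 : ℝ) ^ M = 2 * 2 ^ (M - 1 - i) * 2 ^ i := by
            rw [← pow_succ', ← pow_add]; congr 1; omega
          rw [e, mul_pow]
          field_simp
          ring
  have hgeo : ∑ i ∈ Finset.Ico m M, (2 * 0.965 ^ 20 : ℝ) ^ (M - 1 - i) ≤ 60 := by
    rcases Nat.eq_zero_or_pos M with h0 | h0
    · simp [h0]
    · have := geom_le (r := 2 * 0.965 ^ 20) (by norm_num) (by norm_num) m (M - 1)
      rw [Nat.sub_add_cancel h0] at this
      refine this.trans (by norm_num)
  have hdiag : (0.965 ^ 20 : ℝ) ^ (M - m) ≤ 1 / 2 ^ M := by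
    rw [le_div_iff₀ (by positivity)]
    have e1 : M - m = 36 * m := by omega
    rw [e1, hM, pow_mul _ 36 m, pow_mul _ 37 m, ← mul_pow]
    exact pow_le_one₀ (by positivity) (by norm_num)
  calc _ ≤ 1 / 2 ^ M + ∑ i ∈ Finset.Ico m M,
          16 * (2 * l + 7) / 2 ^ M * (2 * 0.965 ^ 20 : ℝ) ^ (M - 1 - i) :=
        add_le_add hdiag (Finset.sum_le_sum hterm)
    _ ≤ 1 / 2 ^ M + 16 * (2 * l + 7) / 2 ^ M * 60 := by
        rw [← Finset.mul_sum]
        gcongr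
    _ ≤ _ := by
        rw [div_mul_eq_mul_div, ← add_div]
        exact div_le_div_of_nonneg_right (by linarith) (by positivity)

/-- With probability at least `1 / 4`, the signed sums of `A` are well spread and not too large. -/
lemma energy_good {l : ℝ} (hl : 0 ≤ l) : ∃ K : ℝ, 0 < K ∧ ∀ m : ℕ, 20 ≤ m →
    1 / 4 ≤ PP (LP (2 ^ m) (2 ^ (37 * m))) (fun A =>
      En (LP (2 ^ m) (2 ^ (37 * m))) l A ≤ K / 2 ^ (37 * m) ∧
      ∑ p ∈ A, Real.log p ≤ 8 * 2 ^ (37 * m)) := by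
  set K1 : ℝ := 20000 ^ 20 * (1 + 1000 * (2 * l + 7)) with hK1
  have hK0 : 0 < K1 := by positivity
  refine ⟨4 * K1, by positivity, fun m hm => ?_⟩
  set S := LP (2 ^ m) (2 ^ (37 * m)) with hS
  set F : Finset ℕ → ℝ := fun A => if Gd m (37 * m) A then En S l A else 0 with hF
  have h2 : PP S (fun A => 4 * K1 / 2 ^ (37 * m) < F A) ≤ 1 / 4 := by
    refine (PP_markov S (fun A _ => ?_) (by positivity)).trans ?_
    · simp only [hF]; split_ifs
      exacts [En_nonneg _ _ _, le_rfl]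
    · rw [div_le_iff₀ (by positivity)]
      refine (EE_energy hl).trans (le_of_eq ?_)
      rw [← hK1]; ring
  have h3 : PP S (fun A => 8 * (2 : ℝ) ^ (37 * m) < ∑ p ∈ A, Real.log p) ≤ 1 / 4 := by
    refine (PP_markov S (fun A _ => Finset.sum_nonneg fun p _ => Real.log_natCast_nonneg p)
      (by positivity)).trans ?_
    rw [EE_sum_mem, div_le_iff₀ (by positivity)]
    have := mertens_upper (x := 2 ^ m) (y := 2 ^ (37 * m)) (two_pow_mono (by omega))
    have h6 : (2 : ℝ) ^ 20 ≤ 2 ^ (37 * m) := two_pow_mono (by omega)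
    have h7 : (0 : ℝ) < 2 ^ m := by positivity
    norm_num at h6
    linarith
  have h1 := PP_not_Gd (M := 37 * m) hm
  have hc := PP_compl S (fun A => En S l A ≤ 4 * K1 / 2 ^ (37 * m) ∧
      ∑ p ∈ A, Real.log p ≤ 8 * 2 ^ (37 * m))
  have h4 : PP S (fun A => ¬ (En S l A ≤ 4 * K1 / 2 ^ (37 * m) ∧
      ∑ p ∈ A, Real.log p ≤ 8 * 2 ^ (37 * m))) ≤
      PP S (fun A => (¬ Gd m (37 * m) A ∨ 4 * K1 / 2 ^ (37 * m) < F A)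
        ∨ 8 * (2 : ℝ) ^ (37 * m) < ∑ p ∈ A, Real.log p) := by
    refine PP_mono fun A _ h => ?_
    by_contra hcon
    push Not at hcon
    obtain ⟨⟨hg, hf⟩, hl⟩ := hcon
    refine h ⟨?_, hl⟩
    simpa only [hF, if_pos hg] using hf
  have h5 := PP_or_le S (fun A => ¬ Gd m (37 * m) A ∨ 4 * K1 / 2 ^ (37 * m) < F A)
    (fun A => 8 * (2 : ℝ) ^ (37 * m) < ∑ p ∈ A, Real.log p)
  have h6 := PP_or_le S (fun A => ¬ Gd m (37 * m) A) (fun A => 4 * K1 / 2 ^ (37 * m) < F A)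
  linarith

/-! ### Successful blocks -/

/-- `A` contains two different subsets whose products are within a factor `exp 8`. -/
def Succ (A : Finset ℕ) : Prop :=
  ∃ D D' : Finset ℕ, D ⊆ A ∧ D' ⊆ A ∧ D ≠ D' ∧
    |∑ p ∈ D, Real.log p - ∑ p ∈ D', Real.log p| ≤ 8

lemma Succ.mono {A B : Finset ℕ} (h : Succ A) (hAB : A ⊆ B) : Succ B := by
  obtain ⟨D, D', h1, h2, h3, h4⟩ := h
  exact ⟨D, D', h1.trans hAB, h2.trans hAB, h3, h4⟩

/-- Cauchy–Schwarz: a map with few coincidences has a large image. -/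
lemma card_sq_le {α : Type*} [Fintype α] (g : α → ℤ) :
    (Fintype.card α : ℝ) ^ 2 ≤ (Finset.univ.image g).card *
      ∑ f, ∑ e, (if g e = g f then (1 : ℝ) else 0) := by
  set T := Finset.univ.image g with hT
  have hmaps : ∀ x ∈ (Finset.univ : Finset α), g x ∈ T := fun x hx =>
    Finset.mem_image_of_mem g hx
  have h1 : (Fintype.card α : ℝ) = ∑ b ∈ T, ((Finset.univ.filter fun x => g x = b).card : ℝ) := by
    rw [← Finset.card_univ, Finset.card_eq_sum_card_fiberwise hmaps]
    push_cast; rfl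
  have h2 : ∑ f, ∑ e, (if g e = g f then (1 : ℝ) else 0)
      = ∑ b ∈ T, ((Finset.univ.filter fun x => g x = b).card : ℝ) ^ 2 := by
    rw [← Finset.sum_fiberwise_of_maps_to hmaps]
    refine Finset.sum_congr rfl fun b _ => ?_
    rw [Finset.sum_congr rfl (g := fun _ => ((Finset.univ.filter fun x => g x = b).card : ℝ))]
    · rw [Finset.sum_const, nsmul_eq_mul, sq]
    · intro x hx
      rw [(Finset.mem_filter.1 hx).2, Finset.sum_boole]
  rw [h1, h2]
  exact sq_sum_le_card_mul_sum_sq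

/-- The index of the interval of length `8` containing the signed sum. -/
noncomputable def cell {S : Finset ℕ} (A : Finset ℕ) (e : Om S) : ℤ := ⌊sm e A / 8⌋

lemma cell_spec {S : Finset ℕ} (A : Finset ℕ) (e : Om S) :
    8 * (cell A e : ℝ) ≤ sm e A ∧ sm e A < 8 * (cell A e : ℝ) + 8 := by
  have h1 := Int.floor_le (sm e A / 8)
  have h2 := Int.lt_floor_add_one (sm e A / 8)
  unfold cell
  constructor <;> linarith

lemma card_cells (S A : Finset ℕ) :
    1 ≤ ((Finset.univ.image (cell A : Om S → ℤ)).card : ℝ) * En S 8 A := by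
  have h := card_sq_le (cell A : Om S → ℤ)
  rw [card_Om] at h
  push_cast at h
  have h0 : (0 : ℝ) < (3 ^ S.card) ^ 2 := by positivity
  unfold En av
  rw [← mul_div_assoc, le_div_iff₀ h0, one_mul]
  refine h.trans (mul_le_mul_of_nonneg_left ?_ (by positivity))
  refine Finset.sum_le_sum fun f _ => Finset.sum_le_sum fun e _ => ?_
  dsimp only
  by_cases he : cell A e = cell A f
  · have h1 := cell_spec A e
    have h2 := cell_spec A f
    rw [he] at h1
    rw [if_pos he, if_pos]
    rw [abs_le]
    constructor <;> linarith
  · rw [if_neg he]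
    split_ifs <;> norm_num

lemma abs_sg_le {S : Finset ℕ} (e : Om S) (p : ℕ) : |sg e p| ≤ 1 := by
  unfold sg
  split_ifs with h
  · generalize e ⟨p, h⟩ = a
    fin_cases a <;> norm_num
  · norm_num

lemma sg_cases {S : Finset ℕ} (e : Om S) (p : ℕ) : sg e p = 1 ∨ sg e p = -1 ∨ sg e p = 0 := by
  unfold sg
  split_ifs with h
  · generalize e ⟨p, h⟩ = a
    fin_cases a <;> norm_num
  · norm_num

lemma abs_sm_le {S : Finset ℕ} (e : Om S) (A : Finset ℕ) : |sm e A| ≤ ∑ p ∈ A, Real.log p := by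
  refine (Finset.abs_sum_le_sum_abs _ _).trans (Finset.sum_le_sum fun p _ => ?_)
  rw [abs_mul, abs_of_nonneg (Real.log_natCast_nonneg p)]
  exact mul_le_of_le_one_left (Real.log_natCast_nonneg p) (abs_sg_le e p)

lemma sm_eq {S : Finset ℕ} (e : Om S) (A : Finset ℕ) :
    sm e A = ∑ p ∈ A.filter (sg e · = 1), Real.log p
      - ∑ p ∈ A.filter (sg e · = -1), Real.log p := by
  unfold sm
  rw [Finset.sum_filter, Finset.sum_filter, ← Finset.sum_sub_distrib]
  refine Finset.sum_congr rfl fun p _ => ?_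
  rcases sg_cases e p with h | h | h <;> rw [h] <;> norm_num

/-- Two primes `P`, `P'` whose log-difference falls in the same cell as a signed sum over `A`
complete the two halves of that signed sum to a pair of close products. -/
lemma succ_of_pair {S : Finset ℕ} (A : Finset ℕ) (e : Om S) {P P' : ℕ} (hP : P ∉ A) (hP' : P' ∉ A)
    (hne : P ≠ P') (h1 : 8 * (cell A e : ℝ) < Real.log P - Real.log P')
    (h2 : Real.log P - Real.log P' ≤ 8 * (cell A e : ℝ) + 8) : Succ (A ∪ {P', P}) := by
  have hm1 : P' ∉ A.filter (sg e · = 1) := fun h => hP' (Finset.mem_filter.1 h).1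
  have hm2 : P ∉ A.filter (sg e · = -1) := fun h => hP (Finset.mem_filter.1 h).1
  refine ⟨insert P' (A.filter (sg e · = 1)), insert P (A.filter (sg e · = -1)), ?_, ?_, ?_, ?_⟩
  · intro x hx
    simp only [Finset.mem_insert, Finset.mem_filter, Finset.mem_union, Finset.mem_singleton] at *
    tauto
  · intro x hx
    simp only [Finset.mem_insert, Finset.mem_filter, Finset.mem_union, Finset.mem_singleton] at *
    tauto
  · intro h
    have h3 : P ∈ insert P' (A.filter (sg e · = 1)) := h ▸ Finset.mem_insert_self _ _
    rcases Finset.mem_insert.1 h3 with h3 | h3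
    · exact hne h3
    · exact hP (Finset.mem_filter.1 h3).1
  · rw [Finset.sum_insert hm1, Finset.sum_insert hm2]
    have h3 := sm_eq e A
    have h4 := cell_spec A e
    rw [abs_le]
    constructor <;> linarith

/-- The probability that a random subset of `V` is exactly a given pair. -/
lemma prob_pair {V : Finset ℕ} {P P' : ℕ} (hP : P ∈ V) (hP' : P' ∈ V)
    (hne : P ≠ P') :
    (1 / P' : ℝ) * (1 / P) * ∏ p ∈ V, (1 - 1 / p : ℝ)
      ≤ EE V (fun B => if B = {P', P} then 1 else 0) := by
  have hsub : ({P', P} : Finset ℕ) ⊆ V := by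
    intro x hx
    simp only [Finset.mem_insert, Finset.mem_singleton] at hx
    rcases hx with rfl | rfl <;> assumption
  unfold EE
  rw [Finset.sum_eq_single_of_mem _ (Finset.mem_powerset.2 hsub)
    (fun B _ hB => by simp only [if_neg hB, mul_zero])]
  simp only [if_true, mul_one]
  rw [Finset.prod_pair hne.symm]
  refine mul_le_mul_of_nonneg_left ?_ (by positivity)
  rw [← Finset.prod_sdiff hsub]
  refine mul_le_of_le_one_right (Finset.prod_nonneg fun p _ => w_nonneg p)
    (Finset.prod_le_one (fun p _ => w_nonneg p) fun p _ => ?_)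
  have : (0 : ℝ) ≤ 1 / p := by positivity
  linarith

lemma kappa_lower {V : Finset ℕ} (hV : ∀ p ∈ V, p.Prime) :
    Real.exp (-2 * ∑ p ∈ V, (1 / p : ℝ)) ≤ ∏ p ∈ V, (1 - 1 / p : ℝ) := by
  rw [Finset.mul_sum, Real.exp_sum]
  refine Finset.prod_le_prod (fun p _ => Real.exp_nonneg _) fun p hp => ?_
  have h2 : (2 : ℝ) ≤ p := by exact_mod_cast (hV p hp).two_le
  set x : ℝ := 1 / p with hx
  have hx0 : 0 ≤ x := by positivity
  have hx1 : x ≤ 1 / 2 := one_div_le_one_div_of_le (by norm_num) h2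
  rw [show -2 * x = -(2 * x) by ring, Real.exp_neg, inv_le_iff_one_le_mul₀ (Real.exp_pos _)]
  have h3 := Real.add_one_le_exp (2 * x)
  nlinarith

/-- Low energy makes the signed sums over `A` fill a positive proportion of the cells up to height
`8 * L`, and then a pair of primes beyond `exp L` completes `A` to a successful set with probability bounded below. -/
lemma completion {S A : Finset ℕ} {K L : ℝ} (hL : 1000 ≤ L) (hK : 0 < K) (hKL : 2 * K ≤ L)
    (hA : ∀ p ∈ A, Real.log p ≤ L) (hen : En S 8 A ≤ K / L)
    (hsum : ∑ p ∈ A, Real.log p ≤ 8 * L) :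
    Real.exp (-40) / (800 * K) ≤ PP (LP L (20 * L)) (fun B => Succ (A ∪ B)) := by
  have hL0 : 0 < L := by linarith
  set V := LP L (20 * L) with hVdef
  have hV : ∀ p ∈ V, p.Prime := fun p hp => (mem_LP.1 hp).1
  -- the cell `(-8, 0]` is discarded so that `P ≠ P'`
  set C := (Finset.univ.image (cell A : Om S → ℤ)).erase (-1) with hC
  have hCcard : L / (2 * K) ≤ C.card := by
    have h1 := card_cells S A
    have h2 : ((Finset.univ.image (cell A : Om S → ℤ)).card : ℝ) ≤ C.card + 1 := by
      have := Finset.pred_card_le_card_erase (s := Finset.univ.image (cell A : Om S → ℤ)) (a := -1)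
      rw [← hC] at this
      exact_mod_cast Nat.sub_le_iff_le_add.1 this
    set N : ℝ := ((Finset.univ.image (cell A : Om S → ℤ)).card : ℝ)
    have hN : 0 ≤ N := Nat.cast_nonneg _
    have h3 : 1 ≤ N * (K / L) := h1.trans (mul_le_mul_of_nonneg_left hen hN)
    have h4 : L / K ≤ N := by
      rw [div_le_iff₀ hK]
      rw [← mul_div_assoc, le_div_iff₀ hL0] at h3
      linarith
    have h5 : 2 ≤ L / K := by rw [le_div_iff₀ hK]; exact hKL
    have h6 : L / (2 * K) = L / K / 2 := by field_simp
    linarith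
  have hCb : ∀ b ∈ C, |8 * (b : ℝ)| ≤ 8 * L + 8 := by
    intro b hb
    obtain ⟨e, _, rfl⟩ := Finset.mem_image.1 (Finset.mem_of_mem_erase hb)
    have h1 := cell_spec A e
    have h2 := abs_le.1 ((abs_sm_le e A).trans hsum)
    rw [abs_le]
    constructor <;> linarith
  -- `R P' b`: the primes `P` with `log P - log P'` in the cell `b`
  let R : ℕ → ℤ → Finset ℕ := fun P' b =>
    LP (Real.log P' + 8 * b) (Real.log P' + 8 * b + 8)
  have hR : ∀ P' ∈ LP (10 * L) (11 * L), ∀ b ∈ C, ∀ P ∈ R P' b,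
      P ∈ V ∧ P' ∈ V ∧ P ≠ P' ∧ Succ (A ∪ {P', P}) := by
    intro P' hP' b hb P hP
    have hP'' := mem_LP.1 hP'
    have hP2 := mem_LP.1 hP
    have hb2 := abs_le.1 (hCb b hb)
    have hPV : P ∈ V := mem_LP.2 ⟨hP2.1, by linarith, by linarith⟩
    have hPV' : P' ∈ V := mem_LP.2 ⟨hP''.1, by linarith, by linarith⟩
    have hnA : ∀ p ∈ V, p ∉ A := fun p hp hpA => by
      have := (mem_LP.1 hp).2.1
      linarith [hA p hpA]
    have hne : P ≠ P' := by
      rintro rfl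
      have h1 : (b : ℝ) < 0 := by linarith
      have h2 : (-1 : ℝ) ≤ b := by linarith
      have h3 : b < 0 := by exact_mod_cast h1
      have h4 : -1 ≤ b := by exact_mod_cast h2
      exact Finset.ne_of_mem_erase hb (by omega)
    refine ⟨hPV, hPV', hne, ?_⟩
    obtain ⟨e, _, rfl⟩ := Finset.mem_image.1 (Finset.mem_of_mem_erase hb)
    exact succ_of_pair A e (hnA P hPV) (hnA P' hPV') hne (by linarith) (by linarith)
  have hdisj : ∀ P', (C : Set ℤ).PairwiseDisjoint (R P') := by
    intro P' b _ b' _ hne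
    rcases lt_or_gt_of_ne hne with h | h
    · have : (b : ℝ) + 1 ≤ b' := by exact_mod_cast h
      exact LP_disjoint (by linarith)
    · have : (b' : ℝ) + 1 ≤ b := by exact_mod_cast h
      exact (LP_disjoint (by linarith)).symm
  set Q : Finset (Σ _ : ℕ, ℕ) := (LP (10 * L) (11 * L)).sigma (fun P' => C.biUnion (R P')) with hQ
  have hQR : ∀ x ∈ Q, x.2 ∈ V ∧ x.1 ∈ V ∧ x.2 ≠ x.1 ∧ Succ (A ∪ {x.1, x.2}) := by
    intro x hx
    obtain ⟨h1, h2⟩ := Finset.mem_sigma.1 hx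
    obtain ⟨b, hb, h3⟩ := Finset.mem_biUnion.1 h2
    exact hR _ h1 b hb _ h3
  have hQsum : 1 / (400 * K) ≤ ∑ x ∈ Q, (1 / x.1 : ℝ) * (1 / x.2) := by
    have hinner : ∀ P' ∈ LP (10 * L) (11 * L),
        1 / (20 * K) ≤ ∑ P ∈ C.biUnion (R P'), (1 / P : ℝ) := by
      intro P' hP'
      have hP'' := mem_LP.1 hP'
      rw [Finset.sum_biUnion (hdisj P')]
      have h1 : ∀ b ∈ C, 1 / (10 * L) ≤ ∑ P ∈ R P' b, (1 / P : ℝ) := by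
        intro b hb
        have hb2 := abs_le.1 (hCb b hb)
        refine le_trans ?_ (recip_lower (by linarith) (by linarith) (by linarith))
        rw [div_le_div_iff₀ (by linarith) (by linarith)]
        linarith
      calc 1 / (20 * K) = L / (2 * K) * (1 / (10 * L)) := by field_simp; norm_num
        _ ≤ C.card * (1 / (10 * L)) := by gcongr
        _ = ∑ b ∈ C, 1 / (10 * L) := by rw [Finset.sum_const, nsmul_eq_mul]
        _ ≤ _ := Finset.sum_le_sum h1
    rw [Finset.sum_sigma]
    have h2 : (1 : ℝ) / 20 ≤ ∑ P' ∈ LP (10 * L) (11 * L), (1 / P' : ℝ) := by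
      refine le_trans ?_ (recip_lower (by linarith) (by linarith) (by linarith))
      rw [div_le_div_iff₀ (by linarith) (by linarith)]
      linarith
    calc 1 / (400 * K) = 1 / 20 * (1 / (20 * K)) := by field_simp; norm_num
      _ ≤ (∑ P' ∈ LP (10 * L) (11 * L), (1 / P' : ℝ)) * (1 / (20 * K)) := by gcongr
      _ ≤ _ := by
        rw [Finset.sum_mul]
        refine Finset.sum_le_sum fun P' hP' => ?_
        dsimp only
        rw [← Finset.mul_sum]
        exact mul_le_mul_of_nonneg_left (hinner P' hP') (by positivity)
  have hkappa : Real.exp (-40) ≤ ∏ p ∈ V, (1 - 1 / p : ℝ) := by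
    refine le_trans (Real.exp_le_exp.2 ?_) (kappa_lower hV)
    have h1 : ∑ p ∈ V, (1 / p : ℝ) ≤ 20 := by
      refine (recip_upper' (by linarith) hL0).trans ?_
      rw [div_le_iff₀ hL0]
      linarith
    linarith
  -- an unordered pair comes from at most two ordered pairs
  have hpt : ∀ B ⊆ V, ∑ x ∈ Q, (if B = {x.1, x.2} then (1 : ℝ) else 0)
      ≤ 2 * (if Succ (A ∪ B) then 1 else 0) := by
    intro B _
    rw [Finset.sum_boole]
    rcases (Q.filter fun x => B = {x.1, x.2}).eq_empty_or_nonempty with h | ⟨y, hy⟩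
    · rw [h]; simp only [Finset.card_empty, Nat.cast_zero]; split_ifs <;> norm_num
    · obtain ⟨hyQ, hyB⟩ := Finset.mem_filter.1 hy
      rw [if_pos (by rw [hyB]; exact (hQR y hyQ).2.2.2), mul_one]
      have hsub : (Q.filter fun x => B = {x.1, x.2}) ⊆ {⟨y.1, y.2⟩, ⟨y.2, y.1⟩} := by
        rintro ⟨a, b⟩ hx
        obtain ⟨hxQ, hxB⟩ := Finset.mem_filter.1 hx
        have hab := (hQR _ hxQ).2.2.1
        dsimp only at hxB hab
        have ha : a ∈ ({y.1, y.2} : Finset ℕ) := by rw [← hyB, hxB]; simp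
        have hb : b ∈ ({y.1, y.2} : Finset ℕ) := by rw [← hyB, hxB]; simp
        simp only [Finset.mem_insert, Finset.mem_singleton] at ha hb ⊢
        rcases ha with ha | ha <;> rcases hb with hb | hb <;> subst ha <;> subst hb
        exacts [absurd rfl hab, Or.inl rfl, Or.inr rfl, absurd rfl hab]
      have := (Finset.card_le_card hsub).trans Finset.card_le_two
      exact_mod_cast this
  have hmain := EE_mono hpt
  rw [EE_mul, EE_sum] at hmain
  have hlow : (1 / (400 * K)) * Real.exp (-40)
      ≤ ∑ x ∈ Q, EE V (fun B => if B = {x.1, x.2} then (1 : ℝ) else 0) := by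
    calc _ ≤ (∑ x ∈ Q, (1 / x.1 : ℝ) * (1 / x.2)) * ∏ p ∈ V, (1 - 1 / p : ℝ) := by
          gcongr
      _ ≤ _ := by
          rw [Finset.sum_mul]
          refine Finset.sum_le_sum fun x hx => ?_
          obtain ⟨h1, h2, h3, _⟩ := hQR x hx
          exact prob_pair h1 h2 h3
  unfold PP
  have e : Real.exp (-40) / (800 * K) = (1 / (400 * K)) * Real.exp (-40) / 2 := by
    field_simp; norm_num
  rw [e]
  linarith

/-- A single long block of primes is successful with probability bounded below. -/
lemma block : ∃ c : ℝ, 0 < c ∧ c ≤ 1 ∧ ∃ m₀ : ℕ, ∀ m, m₀ ≤ m →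
    c ≤ PP (LP (2 ^ m) (20 * 2 ^ (37 * m))) Succ := by
  obtain ⟨K, hK, hgood⟩ := energy_good (l := 8) (by norm_num)
  obtain ⟨m₁, hm₁⟩ := pow_unbounded_of_one_lt (2 * K) (by norm_num : (1 : ℝ) < 2)
  set c := Real.exp (-40) / (800 * K) * (1 / 4) with hc
  have hc0 : 0 < c := by positivity
  have key : ∀ m, max 20 m₁ ≤ m → c ≤ PP (LP (2 ^ m) (20 * 2 ^ (37 * m))) Succ := by
    intro m hm
    have hm20 : 20 ≤ m := (le_max_left _ _).trans hm
    have hmm₁ : m₁ ≤ m := (le_max_right _ _).trans hm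
    set L : ℝ := 2 ^ (37 * m) with hL
    have hL1 : 1000 ≤ L := by
      have : (2 : ℝ) ^ 20 ≤ L := two_pow_mono (by omega)
      norm_num at this
      linarith
    have hKL : 2 * K ≤ L := hm₁.le.trans (two_pow_mono (by omega))
    set S := LP (2 ^ m) L with hS
    have hun : LP (2 ^ m) (20 * L) = S ∪ LP L (20 * L) :=
      (LP_union (two_pow_mono (by omega)) (by linarith)).symm
    rw [hun, PP, EE_union (LP_disjoint le_rfl)]
    have h := hgood m hm20
    refine le_trans (mul_le_mul_of_nonneg_left h
      (by positivity : 0 ≤ Real.exp (-40) / (800 * K))) ?_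
    rw [PP, ← EE_mul]
    refine EE_mono fun A hA => ?_
    split_ifs with hG
    · rw [mul_one]
      exact completion hL1 hK hKL (fun p hp => (mem_LP.1 (hA hp)).2.2) hG.1 hG.2
    · rw [mul_zero]
      exact PP_nonneg _ _
  exact ⟨c, hc0, (key _ le_rfl).trans (PP_le_one _ _), _, key⟩

/-- Successive independent blocks make the success probability arbitrarily close to `1`. -/
lemma boost {δ : ℝ} (hδ : 0 < δ) (x₀ : ℝ) : ∃ B : Finset ℕ,
    (∀ p ∈ B, p.Prime ∧ x₀ < Real.log p) ∧ PP B (fun A => ¬ Succ A) ≤ δ := by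
  obtain ⟨c, hc0, hc1, m₀, hblock⟩ := block
  have key : ∀ J : ℕ, ∃ B : Finset ℕ,
      (∀ p ∈ B, p.Prime ∧ x₀ < Real.log p) ∧ PP B (fun A => ¬ Succ A) ≤ (1 - c) ^ J := by
    intro J
    induction J with
    | zero => exact ⟨∅, by simp, by simpa using PP_le_one _ _⟩
    | succ J ih =>
      obtain ⟨B, hB, hP⟩ := ih
      -- a block lying beyond `x₀` and beyond all of `B`
      obtain ⟨m₁, hm₁⟩ := pow_unbounded_of_one_lt (max x₀ (∑ p ∈ B, Real.log p))
        (by norm_num : (1 : ℝ) < 2)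
      set m := max m₀ m₁
      have hm : max x₀ (∑ p ∈ B, Real.log p) < 2 ^ m :=
        hm₁.trans_le (two_pow_mono (le_max_right _ _))
      set V := LP (2 ^ m) (20 * 2 ^ (37 * m))
      have hd : Disjoint B V := by
        rw [Finset.disjoint_left]
        intro p hp hpV
        have h1 := Finset.single_le_sum (f := fun p : ℕ => Real.log p)
          (fun p _ => Real.log_natCast_nonneg p) hp
        have h2 := (mem_LP.1 hpV).2.1
        have h3 := le_max_right x₀ (∑ p ∈ B, Real.log p)
        linarith
      refine ⟨B ∪ V, fun p hp => ?_, ?_⟩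
      · rcases Finset.mem_union.1 hp with h | h
        · exact hB p h
        · have h2 := mem_LP.1 h
          exact ⟨h2.1, (le_max_left _ _).trans_lt (hm.trans h2.2.1)⟩
      · have hV : PP V (fun A => ¬ Succ A) ≤ 1 - c := by
          have h1 := hblock m (le_max_left _ _)
          have h2 := PP_compl V Succ
          linarith
        obtain ⟨N, hN⟩ : ∃ N : Finset ℕ → Prop, N = fun A => ¬ Succ A := ⟨_, rfl⟩
        have hNmono : ∀ A A', A ⊆ A' → N A' → N A := fun A A' h h' => by
          rw [hN] at h' ⊢
          exact fun h'' => h' (h''.mono h)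
        rw [← hN] at hP hV ⊢
        rw [PP, EE_union hd, pow_succ]
        calc _ ≤ EE B (fun A => (1 - c) * (if N A then 1 else 0)) := by
              refine EE_mono fun A _ => ?_
              by_cases hA : N A
              · rw [if_pos hA, mul_one]
                exact le_trans (PP_mono fun B' _ h => hNmono _ _ Finset.subset_union_right h) hV
              · have h0 : ∀ B' ⊆ V, (if N (A ∪ B') then (1 : ℝ) else 0) = 0 :=
                  fun B' _ => if_neg fun h => hA (hNmono _ _ Finset.subset_union_left h)
                rw [EE_congr h0, EE_const, if_neg hA, mul_zero]
          _ = (1 - c) * PP B N := EE_mul _ _ _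
          _ ≤ _ := by
              rw [mul_comm]
              exact mul_le_mul_of_nonneg_right hP (by linarith)
  obtain ⟨J, hJ⟩ := exists_pow_lt_of_lt_one hδ (by linarith : 1 - c < 1)
  obtain ⟨B, h1, h2⟩ := key J
  exact ⟨B, h1, h2.trans hJ.le⟩

/-! ### From successful sets to redundant divisors -/

/-- `A` contains `2 ^ K` different subsets with products within a factor `exp (8 K)`. -/
def Multi (K : ℕ) (A : Finset ℕ) : Prop :=
  ∃ F : Finset (Finset ℕ), (∀ X ∈ F, X ⊆ A) ∧ F.card = 2 ^ K ∧
    ∃ t : ℝ, ∀ X ∈ F, t ≤ ∑ p ∈ X, Real.log p ∧ ∑ p ∈ X, Real.log p ≤ t + 8 * K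

/-- The family for `A ∪ B` consists of the unions of a member for `A` with one of the two close subsets
of `B`. -/
lemma Multi.succ {K : ℕ} {A B : Finset ℕ} (hAB : Disjoint A B) (hA : Multi K A) (hB : Succ B) :
    Multi (K + 1) (A ∪ B) := by
  obtain ⟨F, hF, hcard, t, ht⟩ := hA
  obtain ⟨D, D', hD, hD', hne, hclose⟩ := hB
  have hsubB : ∀ Y ∈ ({D, D'} : Finset (Finset ℕ)), Y ⊆ B := by
    intro Y hY
    simp only [Finset.mem_insert, Finset.mem_singleton] at hY
    rcases hY with rfl | rfl <;> assumption
  refine ⟨(F ×ˢ {D, D'}).image (fun x => x.1 ∪ x.2), ?_, ?_, ?_⟩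
  · intro Z hZ
    obtain ⟨⟨X, Y⟩, hXY, rfl⟩ := Finset.mem_image.1 hZ
    obtain ⟨hX, hY⟩ := Finset.mem_product.1 hXY
    exact Finset.union_subset_union (hF X hX) (hsubB Y hY)
  · rw [Finset.card_image_of_injOn, Finset.card_product, hcard, Finset.card_pair hne, pow_succ]
    rintro ⟨X, Y⟩ hXY ⟨X', Y'⟩ hXY' h
    obtain ⟨hX, hY⟩ := Finset.mem_product.1 (Finset.mem_coe.1 hXY)
    obtain ⟨hX', hY'⟩ := Finset.mem_product.1 (Finset.mem_coe.1 hXY')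
    have hA1 : ∀ X Y : Finset ℕ, X ⊆ A → Y ⊆ B → (X ∪ Y) ∩ A = X ∧ (X ∪ Y) ∩ B = Y := by
      intro X Y hX hY
      have h1 := Finset.disjoint_left.1 hAB
      constructor <;> ext a <;> simp only [Finset.mem_inter, Finset.mem_union] <;>
        have := @hX a <;> have := @hY a <;> have := @h1 a <;> tauto
    have e1 := hA1 X Y (hF X hX) (hsubB Y hY)
    have e2 := hA1 X' Y' (hF X' hX') (hsubB Y' hY')
    dsimp only at h
    rw [h] at e1
    exact Prod.ext (e1.1.symm.trans e2.1) (e1.2.symm.trans e2.2)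
  · refine ⟨t + min (∑ p ∈ D, Real.log p) (∑ p ∈ D', Real.log p), fun Z hZ => ?_⟩
    obtain ⟨⟨X, Y⟩, hXY, rfl⟩ := Finset.mem_image.1 hZ
    obtain ⟨hX, hY⟩ := Finset.mem_product.1 hXY
    have h1 := ht X hX
    dsimp only at hX hY ⊢
    rw [Finset.sum_union (hAB.mono (hF X hX) (hsubB Y hY))]
    rw [abs_le] at hclose
    have h2 : min (∑ p ∈ D, Real.log p) (∑ p ∈ D', Real.log p) ≤ ∑ p ∈ Y, Real.log p ∧
        ∑ p ∈ Y, Real.log p ≤ min (∑ p ∈ D, Real.log p) (∑ p ∈ D', Real.log p) + 8 := by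
      simp only [Finset.mem_insert, Finset.mem_singleton] at hY
      rcases hY with rfl | rfl
      · refine ⟨min_le_left _ _, ?_⟩
        rcases min_cases (∑ p ∈ Y, Real.log p) (∑ p ∈ D', Real.log p) with h | h <;> linarith
      · refine ⟨min_le_right _ _, ?_⟩
        rcases min_cases (∑ p ∈ D, Real.log p) (∑ p ∈ Y, Real.log p) with h | h <;> linarith
    push_cast
    constructor <;> linarith

lemma PP_marginal {S T : Finset ℕ} (h : T ⊆ S) (P : Finset ℕ → Prop) :
    PP S (fun A => P (A ∩ T)) = PP T P :=
  EE_marginal h (fun A => if P A then 1 else 0)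

lemma multi_exists (K : ℕ) : ∀ δ : ℝ, 0 < δ → ∃ P : Finset ℕ, (∀ p ∈ P, p.Prime) ∧
    PP P (fun A => ¬ Multi K A) ≤ δ := by
  induction K with
  | zero =>
    intro δ hδ
    refine ⟨∅, by simp, ?_⟩
    have h : Multi 0 ∅ := ⟨{∅}, by simp, by simp, 0, by simp⟩
    rw [PP, EE_empty, if_neg (not_not.2 h)]
    exact hδ.le
  | succ K ih =>
    intro δ hδ
    obtain ⟨P, hP, hPδ⟩ := ih (δ / 2) (by linarith)
    obtain ⟨B, hB, hBδ⟩ := boost (δ := δ / 2) (by linarith) (∑ p ∈ P, Real.log p)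
    have hd : Disjoint P B := by
      rw [Finset.disjoint_left]
      intro p hp hpB
      have h1 := Finset.single_le_sum (f := fun p : ℕ => Real.log p)
        (fun p _ => Real.log_natCast_nonneg p) hp
      linarith [(hB p hpB).2]
    refine ⟨P ∪ B, fun p hp => ?_, ?_⟩
    · rcases Finset.mem_union.1 hp with h | h
      exacts [hP p h, (hB p h).1]
    · have h1 : PP (P ∪ B) (fun A => ¬ Multi K (A ∩ P)) = PP P (fun A => ¬ Multi K A) :=
        PP_marginal Finset.subset_union_left (fun A => ¬ Multi K A)
      have h2 : PP (P ∪ B) (fun A => ¬ Succ (A ∩ B)) = PP B (fun A => ¬ Succ A) :=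
        PP_marginal Finset.subset_union_right (fun A => ¬ Succ A)
      have h3 : PP (P ∪ B) (fun A => ¬ Multi (K + 1) A)
          ≤ PP (P ∪ B) (fun A => ¬ Multi K (A ∩ P) ∨ ¬ Succ (A ∩ B)) := by
        refine PP_mono fun A hA h => ?_
        by_contra hcon
        push Not at hcon
        refine h ?_
        have h4 := Multi.succ (hd.mono Finset.inter_subset_right Finset.inter_subset_right)
          hcon.1 hcon.2
        rwa [← Finset.inter_union_distrib_left, Finset.inter_eq_left.2 hA] at h4
      have h4 := PP_or_le (P ∪ B) (fun A => ¬ Multi K (A ∩ P)) (fun A => ¬ Succ (A ∩ B))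
      linarith

lemma tauPlus_le (n : ℕ) (hn : n ≠ 0) : tauPlus n ≤ (n.divisors.image (Nat.clog 2)).card := by
  unfold tauPlus
  refine Finset.card_le_card_of_injOn (· + 1) ?_ (fun a _ b _ h => by simpa using h)
  intro k hk
  obtain ⟨_, d, hd, h1, h2⟩ := Finset.mem_filter.1 (Finset.mem_coe.1 hk)
  refine Finset.mem_coe.2 (Finset.mem_image.2 ⟨d, Nat.mem_divisors.2 ⟨hd, hn⟩, ?_⟩)
  refine le_antisymm (Nat.clog_le_of_le_pow h2) ?_
  exact Nat.succ_le_of_lt ((Nat.lt_clog_iff_pow_lt (by norm_num)).2 h1)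

/-- Removing the primes of `P` from `n` divides the number of divisors by a bounded factor. -/
lemma exists_coprime_part {n k : ℕ} (hn : n ≠ 0) (P : Finset ℕ) (hP : ∀ p ∈ P, p.Prime)
    (hk : ∀ p ∈ P, ¬ p ^ k ∣ n) : ∃ b, b ∣ n ∧ (∀ p ∈ P, ¬ p ∣ b) ∧
      n.divisors.card ≤ k ^ P.card * b.divisors.card := by
  induction P using Finset.induction_on with
  | empty => exact ⟨n, dvd_rfl, by simp, by simp⟩
  | insert p P hp ih =>
    obtain ⟨b, hb, hbP, hcard⟩ := ih (fun q hq => hP q (Finset.mem_insert_of_mem hq))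
      (fun q hq => hk q (Finset.mem_insert_of_mem hq))
    have hpp := hP p (Finset.mem_insert_self _ _)
    have hb0 : b ≠ 0 := ne_zero_of_dvd_ne_zero hn hb
    have hmul := Nat.ordProj_mul_ordCompl_eq_self b p
    set v := b.factorization p
    set b' := b / p ^ v
    have hcop : Nat.Coprime p b' := Nat.coprime_ordCompl hpp hb0
    refine ⟨b', (Dvd.intro_left _ hmul).trans hb, ?_, ?_⟩
    · intro q hq
      rcases Finset.mem_insert.1 hq with rfl | hq
      · exact (Nat.Prime.coprime_iff_not_dvd hpp).1 hcop
      · exact fun h => hbP q hq (h.trans (Dvd.intro_left _ hmul))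
    · have h1 : b.divisors.card = (v + 1) * b'.divisors.card := by
        rw [← hmul, Nat.Coprime.card_divisors_mul (hcop.pow_left v), Nat.divisors_prime_pow hpp,
          Finset.card_map, Finset.card_range]
      have h2 : v + 1 ≤ k := by
        by_contra h
        refine hk p (Finset.mem_insert_self _ _) ?_
        exact (pow_dvd_pow p (by omega : k ≤ v)).trans ((Dvd.intro _ hmul).trans hb)
      rw [Finset.card_insert_of_notMem hp, pow_succ, mul_assoc]
      refine hcard.trans (Nat.mul_le_mul_left _ ?_)
      rw [h1]
      exact Nat.mul_le_mul_right _ h2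

lemma prod_inj {P X Y : Finset ℕ} (hP : ∀ p ∈ P, p.Prime) (hX : X ⊆ P) (hY : Y ⊆ P)
    (h : ∏ p ∈ X, p = ∏ p ∈ Y, p) : X = Y := by
  rw [← Nat.primeFactors_prod fun p hp => hP p (hX hp), h,
    Nat.primeFactors_prod fun p hp => hP p (hY hp)]

/-- A family of `2 ^ 8` products within a factor `exp 64 < 2 ^ 93` has two members in the same
dyadic interval, even after multiplication by `e`. -/
lemma pigeonhole {A : Finset ℕ} (hA : ∀ p ∈ A, p.Prime) (h : Multi 8 A) (e : ℕ) :
    ∃ X Y : Finset ℕ, X ⊆ A ∧ Y ⊆ A ∧ X ≠ Y ∧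
      Nat.clog 2 (e * ∏ p ∈ X, p) = Nat.clog 2 (e * ∏ p ∈ Y, p) := by
  obtain ⟨F, hF, hcard, t, ht⟩ := h
  have hne : F.Nonempty := Finset.card_pos.1 (by rw [hcard]; norm_num)
  obtain ⟨X₀, hX₀, hmin⟩ := Finset.exists_min_image F
    (fun X => Nat.clog 2 (e * ∏ p ∈ X, p)) hne
  have hlog : ∀ X ∈ F, Real.log ((∏ p ∈ X, p : ℕ) : ℝ) = ∑ p ∈ X, Real.log p := by
    intro X hX
    push_cast
    exact Real.log_prod fun p hp => by exact_mod_cast (hA p (hF X hX hp)).ne_zero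
  have hpos : ∀ X ∈ F, 0 < ∏ p ∈ X, p := fun X hX =>
    Finset.prod_pos fun p hp => (hA p (hF X hX hp)).pos
  have hmaps : ∀ X ∈ F, Nat.clog 2 (e * ∏ p ∈ X, p) ∈ Finset.Icc
      (Nat.clog 2 (e * ∏ p ∈ X₀, p)) (Nat.clog 2 (e * ∏ p ∈ X₀, p) + 93) := by
    intro X hX
    refine Finset.mem_Icc.2 ⟨hmin X hX, Nat.clog_le_of_le_pow ?_⟩
    have h1 : ∏ p ∈ X, p ≤ (∏ p ∈ X₀, p) * 2 ^ 93 := by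
      have h0 : (0 : ℝ) < ((∏ p ∈ X, p : ℕ) : ℝ) := by exact_mod_cast hpos X hX
      have h0' : (0 : ℝ) < ((∏ p ∈ X₀, p : ℕ) : ℝ) := by exact_mod_cast hpos X₀ hX₀
      have h2 : Real.log ((∏ p ∈ X, p : ℕ) : ℝ)
          ≤ Real.log (((∏ p ∈ X₀, p : ℕ) : ℝ) * 2 ^ 93) := by
        rw [Real.log_mul h0'.ne' (by positivity), Real.log_pow, hlog X hX, hlog X₀ hX₀]
        have := Real.log_two_gt_d9
        have h3 := (ht X hX).2
        have h4 := (ht X₀ hX₀).1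
        push_cast at *
        linarith
      have h5 := (Real.log_le_log_iff h0 (by positivity)).1 h2
      exact_mod_cast h5
    calc e * ∏ p ∈ X, p ≤ e * ((∏ p ∈ X₀, p) * 2 ^ 93) := Nat.mul_le_mul_left _ h1
      _ = (e * ∏ p ∈ X₀, p) * 2 ^ 93 := by ring
      _ ≤ 2 ^ Nat.clog 2 (e * ∏ p ∈ X₀, p) * 2 ^ 93 :=
          Nat.mul_le_mul_right _ (Nat.le_pow_clog (by norm_num) _)
      _ = _ := (pow_add _ _ _).symm
  obtain ⟨X, hX, Y, hY, hXY, heq⟩ := Finset.exists_ne_map_eq_of_card_lt_of_maps_to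
    (by rw [Nat.card_Icc, hcard]; omega) hmaps
  exact ⟨X, Y, hF X hX, hF Y hY, hXY, heq⟩

/-- Every divisor of the part of `n` coprime to `P` produces a divisor of `n` that shares its dyadic
interval with another one, and these redundant divisors are distinct. -/
lemma image_card_le {n b : ℕ} (hn : n ≠ 0) (P : Finset ℕ) (hP : ∀ p ∈ P, p.Prime)
    (hb : b ∣ n) (hbP : ∀ p ∈ P, ¬ p ∣ b) (hM : Multi 8 (P.filter (· ∣ n))) :
    (n.divisors.image (Nat.clog 2)).card + b.divisors.card ≤ n.divisors.card := by
  set A := P.filter (· ∣ n) with hA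
  have hAp : ∀ p ∈ A, p.Prime := fun p hp => hP p (Finset.mem_filter.1 hp).1
  have hb0 : b ≠ 0 := ne_zero_of_dvd_ne_zero hn hb
  have hex : ∀ e : ℕ, ∃ X Y : Finset ℕ, e ∣ b → X ⊆ A ∧ Y ⊆ A ∧ X ≠ Y ∧
      Nat.clog 2 (e * ∏ p ∈ X, p) = Nat.clog 2 (e * ∏ p ∈ Y, p) := by
    intro e
    by_cases he : e ∣ b
    · obtain ⟨X, Y, h⟩ := pigeonhole hAp hM e
      exact ⟨X, Y, fun _ => h⟩
    · exact ⟨∅, ∅, fun h => absurd h he⟩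
  choose X Y hXY using hex
  have hcop : ∀ e, e ∣ b → ∀ Z ⊆ A, Nat.Coprime e (∏ p ∈ Z, p) := by
    intro e he Z hZ
    refine Nat.Coprime.prod_right fun p hp => ?_
    have hpA := hZ hp
    refine ((Nat.Prime.coprime_iff_not_dvd (hAp p hpA)).2 fun h => ?_).symm
    exact hbP p (Finset.mem_filter.1 hpA).1 (h.trans he)
  have hdvd : ∀ e, e ∣ b → ∀ Z ⊆ A, e * ∏ p ∈ Z, p ∣ n := by
    intro e he Z hZ
    refine (hcop e he Z hZ).mul_dvd_of_dvd_of_dvd (he.trans hb) ?_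
    exact Finset.prod_primes_dvd n (fun p hp => (hAp p (hZ hp)).prime)
      (fun p hp => (Finset.mem_filter.1 (hZ hp)).2)
  have hinj : ∀ e e', e ∣ b → e' ∣ b → ∀ Z Z', Z ⊆ A → Z' ⊆ A →
      e * ∏ p ∈ Z, p = e' * ∏ p ∈ Z', p → e = e' := by
    intro e e' he he' Z Z' hZ hZ' h
    refine Nat.dvd_antisymm ?_ ?_
    · exact (hcop e he Z' hZ').dvd_of_dvd_mul_right (h ▸ Dvd.intro _ rfl)
    · exact (hcop e' he' Z hZ).dvd_of_dvd_mul_right (h.symm ▸ Dvd.intro _ rfl)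
  set R := b.divisors.image (fun e => e * ∏ p ∈ X e, p) with hR
  have hRcard : R.card = b.divisors.card := by
    refine Finset.card_image_of_injOn fun e he e' he' h => ?_
    have h1 := Nat.dvd_of_mem_divisors (Finset.mem_coe.1 he)
    have h2 := Nat.dvd_of_mem_divisors (Finset.mem_coe.1 he')
    exact hinj e e' h1 h2 _ _ (hXY e h1).1 (hXY e' h2).1 h
  have hRsub : R ⊆ n.divisors := by
    intro r hr
    obtain ⟨e, he, rfl⟩ := Finset.mem_image.1 hr
    have h1 := Nat.dvd_of_mem_divisors he
    exact Nat.mem_divisors.2 ⟨hdvd e h1 _ (hXY e h1).1, hn⟩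
  have himg : n.divisors.image (Nat.clog 2) ⊆ (n.divisors \ R).image (Nat.clog 2) := by
    intro j hj
    obtain ⟨d, hd, rfl⟩ := Finset.mem_image.1 hj
    by_cases hdR : d ∈ R
    · obtain ⟨e, he, rfl⟩ := Finset.mem_image.1 hdR
      have h1 := Nat.dvd_of_mem_divisors he
      obtain ⟨hX, hY, hne, heq⟩ := hXY e h1
      rw [heq]
      refine Finset.mem_image_of_mem _ (Finset.mem_sdiff.2
        ⟨Nat.mem_divisors.2 ⟨hdvd e h1 _ hY, hn⟩, fun h => ?_⟩)
      obtain ⟨e', he', h'⟩ := Finset.mem_image.1 h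
      have h2 := Nat.dvd_of_mem_divisors he'
      have h3 : e' = e := hinj e' e h2 h1 _ _ (hXY e' h2).1 hY h'
      subst h3
      exact hne (prod_inj hAp hX hY
        (Nat.eq_of_mul_eq_mul_left (Nat.pos_of_dvd_of_pos h1 (Nat.pos_of_ne_zero hb0)) h'))
    · exact Finset.mem_image_of_mem _ (Finset.mem_sdiff.2 ⟨hd, hdR⟩)
  have h1 := (Finset.card_le_card himg).trans Finset.card_image_le
  have h2 := Finset.card_sdiff_add_card_eq_card hRsub
  omega

lemma tauPlus_bound {n k : ℕ} (hn : n ≠ 0) (hk0 : 0 < k) (P : Finset ℕ) (hP : ∀ p ∈ P, p.Prime)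
    (hk : ∀ p ∈ P, ¬ p ^ k ∣ n) (hM : Multi 8 (P.filter (· ∣ n))) :
    (tauPlus n : ℝ) ≤ (1 - 1 / (k : ℝ) ^ P.card) * n.divisors.card := by
  obtain ⟨b, hb, hbP, hcard⟩ := exists_coprime_part hn P hP hk
  have h1 := image_card_le hn P hP hb hbP hM
  have h2 := tauPlus_le n hn
  have h3 : (tauPlus n : ℝ) + b.divisors.card ≤ n.divisors.card := by
    exact_mod_cast (Nat.add_le_add_right h2 _).trans h1
  have h4 : (n.divisors.card : ℝ) ≤ (k : ℝ) ^ P.card * b.divisors.card := by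
    exact_mod_cast hcard
  have h5 : (0 : ℝ) < (k : ℝ) ^ P.card := by positivity
  have h6 : 1 / (k : ℝ) ^ P.card * n.divisors.card ≤ b.divisors.card := by
    rw [one_div_mul_eq_div, div_le_iff₀ h5]
    linarith
  linarith

lemma card_multiples_le (q N : ℕ) :
    (((Finset.Icc 1 N).filter (q ∣ ·)).card : ℝ) ≤ N / q := by
  have h : ((Finset.Icc 1 N).filter (q ∣ ·)).card = N / q := Nat.Ioc_filter_dvd_card_eq_div N q
  rw [h]
  exact Nat.cast_div_le

/-- The density estimate behind the theorem, with the event of failure for `n` split into the failure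
of its set of small prime factors and divisibility by a high prime power. -/
lemma eventually_bad {ε : ℝ} (hε : 0 < ε) : ∃ η : ℝ, 0 < η ∧ ∀ᶠ N : ℕ in atTop,
    (countIn {n : ℕ | 1 ≤ n ∧ (1 - η) * (n.divisors.card : ℝ) < (tauPlus n : ℝ)} N : ℝ) / N
      ≤ ε := by
  obtain ⟨P, hP, hPε⟩ := multi_exists 8 (ε / 4) (by linarith)
  obtain ⟨k, hk⟩ := pow_unbounded_of_one_lt (P.card / (ε / 2)) (by norm_num : (1 : ℝ) < 2)
  have hk0 : 0 < k + 1 := Nat.succ_pos k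
  refine ⟨1 / ((k + 1 : ℕ) : ℝ) ^ P.card, by positivity, ?_⟩
  obtain ⟨Q, hQ⟩ : ∃ Q : Finset ℕ → Prop, Q = fun A => ¬ Multi 8 A := ⟨_, rfl⟩
  rw [← hQ] at hPε
  have hlim := tendsto_EE P hP (fun A => if Q A then 1 else 0)
  have hlt : EE P (fun A => if Q A then 1 else 0) < ε / 2 := by
    have : PP P Q < ε / 2 := by linarith
    exact this
  filter_upwards [hlim.eventually_lt_const hlt, eventually_gt_atTop 0] with N hN hN0
  have hN0' : (0 : ℝ) < N := by exact_mod_cast hN0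
  rw [div_lt_iff₀ hN0', Finset.sum_boole] at hN
  have hsub : (Finset.Icc 1 N).filter (· ∈ {n : ℕ | 1 ≤ n ∧
      (1 - 1 / ((k + 1 : ℕ) : ℝ) ^ P.card) * (n.divisors.card : ℝ) < (tauPlus n : ℝ)})
      ⊆ (Finset.Icc 1 N).filter (fun n => Q (P.filter (· ∣ n)))
        ∪ P.biUnion (fun p => (Finset.Icc 1 N).filter (p ^ (k + 1) ∣ ·)) := by
    intro n hn
    obtain ⟨h1, h2, h3⟩ := Finset.mem_filter.1 hn
    by_contra hcon
    simp only [hQ, Finset.mem_union, Finset.mem_filter, Finset.mem_biUnion, not_or, not_and, h1,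
      true_and, not_not, not_exists] at hcon
    exact absurd h3 (not_lt.2 (tauPlus_bound (by omega) hk0 P hP hcon.2 hcon.1))
  have hcard := (Finset.card_le_card hsub).trans (Finset.card_union_le _ _)
  have hcard2 : (countIn {n : ℕ | 1 ≤ n ∧
      (1 - 1 / ((k + 1 : ℕ) : ℝ) ^ P.card) * (n.divisors.card : ℝ) < (tauPlus n : ℝ)} N : ℝ)
      ≤ ((Finset.Icc 1 N).filter (fun n => Q (P.filter (· ∣ n)))).card
        + ∑ p ∈ P, (((Finset.Icc 1 N).filter (p ^ (k + 1) ∣ ·)).card : ℝ) := by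
    have := hcard.trans (Nat.add_le_add_left Finset.card_biUnion_le _)
    unfold countIn
    exact_mod_cast this
  have hpow : ∑ p ∈ P, (((Finset.Icc 1 N).filter (p ^ (k + 1) ∣ ·)).card : ℝ)
      ≤ ε / 2 * N := by
    calc _ ≤ ∑ p ∈ P, (N : ℝ) / 2 ^ k := by
          refine Finset.sum_le_sum fun p hp => ?_
          refine (card_multiples_le _ N).trans ?_
          refine div_le_div_of_nonneg_left hN0'.le (by positivity) ?_
          have h2 : 2 ^ k ≤ p ^ (k + 1) :=
            (Nat.pow_le_pow_left (hP p hp).two_le k).trans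
              (Nat.pow_le_pow_right (hP p hp).pos (Nat.le_succ k))
          exact_mod_cast h2
      _ = P.card / 2 ^ k * N := by rw [Finset.sum_const, nsmul_eq_mul]; ring
      _ ≤ ε / 2 * N := by
          refine mul_le_mul_of_nonneg_right ?_ hN0'.le
          rw [div_lt_iff₀ (by linarith)] at hk
          rw [div_le_iff₀ (by positivity)]
          linarith
  rw [div_le_iff₀ hN0']
  linarith

end MT

theorem tauPlus_ratio_distribution_continuous_at_one :
    ∀ ε : ℝ, 0 < ε → ∃ η : ℝ, 0 < η ∧
      limsup (fun N : ℕ =>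
          (countIn {n : ℕ | 1 ≤ n ∧
            (1 - η) * (n.divisors.card : ℝ) < (tauPlus n : ℝ)} N : ℝ) / N) atTop ≤ ε := by
  intro ε hε
  obtain ⟨η, hη, h⟩ := MT.eventually_bad hε
  refine ⟨η, hη, limsup_le_of_le ?_ h⟩
  exact isCoboundedUnder_le_of_le atTop (x := 0) fun N => by positivity
end
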